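/- arXiv:cond-mat/9812201 — 9 statements merged into one kernel-verified Lean document; each statement's English description precedes it below -/
import Mathlib

section
/- (Proposition A, part (i); generalized Krebs–Sandow cancelling mechanism, periodic case.) Let m ≥ 1, r ≥ 2, n ≥ 1, and let h be a local transition matrix of range r on m states. Suppose there exist n×n real matrices D_0, …, D_{m−1} and, for every (r−1)-tuple i = (i_1,…,i_{r−1}) ∈ (Fin (r−1) → Fin m), an n×n real matrix X_i, such that for every r-tuple (i_1,…,i_r): Σ_{τ=(τ_1,…,τ_r)} h[(i_1,…,i_r), τ] · D_{τ_1} D_{τ_2} ⋯ D_{τ_r} = X_{(i_1,…,i_{r−1})} D_{i_r} − D_{i_1} X_{(i_2,…,i_r)} (products are matrix products). Then for every L ≥ r, the function P on configurations defined by P(σ) = Trace(D_{σ(0)} D_{σ(1)} ⋯ D_{σ(L−1)}) satisfies H^(p)_L P = 0, i.e. the matrix-product state P is a zero-energy eigenvector (stationary state) of the periodic stochastic Hamiltonian. -/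
open Finset

noncomputable section

/-- The configuration `σ` with the values at sites `k, k+1, …, k+r-1` (taken mod `L`)
replaced by the tuple `τ`. -/
def updateConfig (L m r : ℕ) (σ : Fin L → Fin m) (k : ℕ) (τ : Fin r → Fin m) :
    Fin L → Fin m :=
  fun i => if h : ∃ j : Fin r, (i : ℕ) = (k + (j : ℕ)) % L then τ h.choose else σ i

/-- The periodic stochastic Hamiltonian with bulk interaction of range `r`, acting on
real-valued functions of configurations of a ring of `L` sites with `m` states per site. -/
def Hper (L m r : ℕ) (h : (Fin r → Fin m) → (Fin r → Fin m) → ℝ)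
    (f : (Fin L → Fin m) → ℝ) : (Fin L → Fin m) → ℝ :=
  fun σ => ∑ k : Fin L, ∑ τ : Fin r → Fin m,
    h (fun j => σ ⟨((k : ℕ) + (j : ℕ)) % L, Nat.mod_lt _ k.pos⟩) τ *
      f (updateConfig L m r σ (k : ℕ) τ)

/-- The open-chain stochastic Hamiltonian with bulk interaction `hb` of range `r` and
boundary interactions `hl`, `hr` of range `r-1`, acting on real-valued functions of
configurations of a chain of `L` sites with `m` states per site. -/
def Hopen (L m r : ℕ) (hL : 0 < L)
    (hb : (Fin r → Fin m) → (Fin r → Fin m) → ℝ)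
    (hl hr : (Fin (r - 1) → Fin m) → (Fin (r - 1) → Fin m) → ℝ)
    (f : (Fin L → Fin m) → ℝ) : (Fin L → Fin m) → ℝ :=
  fun σ =>
    (∑ τ : Fin (r - 1) → Fin m,
      hl (fun j => σ ⟨(j : ℕ) % L, Nat.mod_lt _ hL⟩) τ *
        f (updateConfig L m (r - 1) σ 0 τ))
    + (∑ k ∈ Finset.range (L - r + 1), ∑ τ : Fin r → Fin m,
      hb (fun j => σ ⟨(k + (j : ℕ)) % L, Nat.mod_lt _ hL⟩) τ *
        f (updateConfig L m r σ k τ))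
    + (∑ τ : Fin (r - 1) → Fin m,
      hr (fun j => σ ⟨((L - (r - 1)) + (j : ℕ)) % L, Nat.mod_lt _ hL⟩) τ *
        f (updateConfig L m (r - 1) σ (L - (r - 1)) τ))

/-- The local transition matrix associated to a family of transition rates `w`:
`h[τ',τ] = -w(τ→τ')` off the diagonal and `h[τ,τ] = ∑_{τ'≠τ} w(τ→τ')`. -/
def rateToH {m k : ℕ} (w : (Fin k → Fin m) → (Fin k → Fin m) → ℝ) :
    (Fin k → Fin m) → (Fin k → Fin m) → ℝ :=
  fun a b => if a = b then ∑ c ∈ Finset.univ.filter (fun c => c ≠ a), w a c else -(w b a)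


def WW {n : ℕ} (g : ℕ → Matrix (Fin n) (Fin n) ℝ) (a len : ℕ) : Matrix (Fin n) (Fin n) ℝ :=
  (List.ofFn fun j : Fin len => g (a + (j : ℕ))).prod

lemma WW_succ {n : ℕ} (g : ℕ → Matrix (Fin n) (Fin n) ℝ) (a len : ℕ) :
    WW g a (len + 1) = g a * WW g (a + 1) len := by
  simp only [WW, List.ofFn_succ, List.prod_cons, Fin.val_zero, Fin.val_succ, add_zero]
  congr 2
  congr 1
  funext j
  congr 1
  omega

lemma WW_add {n : ℕ} (g : ℕ → Matrix (Fin n) (Fin n) ℝ) (a p q : ℕ) :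
    WW g a (p + q) = WW g a p * WW g (a + p) q := by
  induction p generalizing a with
  | zero => simp [WW]
  | succ p ih =>
    rw [show p + 1 + q = (p + q) + 1 by omega, WW_succ, WW_succ, ih, mul_assoc,
      show a + 1 + p = a + (p + 1) by omega]

lemma WW_one {n : ℕ} (g : ℕ → Matrix (Fin n) (Fin n) ℝ) (a : ℕ) : WW g a 1 = g a := by
  simp [WW]

lemma WW_congr {n : ℕ} (g g' : ℕ → Matrix (Fin n) (Fin n) ℝ) (a a' len : ℕ)
    (hg : ∀ j < len, g (a + j) = g' (a' + j)) : WW g a len = WW g' a' len := by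
  simp only [WW]
  congr 2
  funext j
  exact hg j j.isLt

lemma WW_trace {n : ℕ} (g : ℕ → Matrix (Fin n) (Fin n) ℝ) (L : ℕ) (hL : 1 ≤ L)
    (hg : ∀ a, g (a + L) = g a) (k : ℕ) : (WW g k L).trace = (WW g 0 L).trace := by
  induction k with
  | zero => rfl
  | succ k ih =>
    obtain ⟨l, rfl⟩ : ∃ l, L = l + 1 := ⟨L - 1, by omega⟩
    rw [← ih, WW_add g (k + 1) l 1, WW_one, WW_succ, Matrix.trace_mul_comm,
      show k + 1 + l = k + (l + 1) by omega, hg]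

lemma update_at (L m r : ℕ) (hL : r ≤ L) (σ : Fin L → Fin m) (k : ℕ) (τ : Fin r → Fin m)
    (j : ℕ) (hj : j < L) (hp : (k + j) % L < L) :
    updateConfig L m r σ k τ ⟨(k + j) % L, hp⟩ =
      if hjr : j < r then τ ⟨j, hjr⟩ else σ ⟨(k + j) % L, hp⟩ := by
  have key : ∀ j' : Fin r, (k + j) % L = (k + (j' : ℕ)) % L → j = j' := by
    intro j' he
    have h1 : k + j ≡ k + (j' : ℕ) [MOD L] := he
    have h2 := Nat.ModEq.add_left_cancel' k h1
    have h3 : j % L = (j' : ℕ) % L := h2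
    rwa [Nat.mod_eq_of_lt hj, Nat.mod_eq_of_lt (lt_of_lt_of_le j'.isLt hL)] at h3
  unfold updateConfig
  split_ifs with h1 h2 h2
  · congr 1
    apply Fin.ext
    exact (key _ h1.choose_spec).symm
  · exact absurd (key _ h1.choose_spec) (by have := h1.choose.isLt; omega)
  · exact absurd ⟨⟨j, h2⟩, rfl⟩ h1
  · rfl

/-- **Proposition A, part (i)** (generalized Krebs–Sandow cancelling mechanism, periodic
case): if matrices `D_i` and `X_i` satisfy the bulk cancelling mechanism for a local
transition matrix `h` of range `r`, then the matrix-product state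
`P(σ) = Trace (D_{σ 0} ⋯ D_{σ (L-1)})` is a zero-energy eigenvector of the periodic
stochastic Hamiltonian for every `L ≥ r`. -/
theorem prop_A_periodic (m r n L : ℕ) (hm : 1 ≤ m) (hr : 2 ≤ r) (hn : 1 ≤ n)
    (hL : r ≤ L)
    (h : (Fin r → Fin m) → (Fin r → Fin m) → ℝ)
    (D : Fin m → Matrix (Fin n) (Fin n) ℝ)
    (X : (Fin (r - 1) → Fin m) → Matrix (Fin n) (Fin n) ℝ)
    (hbulk : ∀ i : Fin r → Fin m,
      ∑ τ : Fin r → Fin m, h i τ • (List.ofFn fun j => D (τ j)).prod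
        = X (fun j : Fin (r - 1) => i ⟨(j : ℕ), by have := j.isLt; omega⟩) *
            D (i ⟨r - 1, by omega⟩)
          - D (i ⟨0, by omega⟩) *
            X (fun j : Fin (r - 1) => i ⟨(j : ℕ) + 1, by have := j.isLt; omega⟩)) :
    Hper L m r h (fun σ => ((List.ofFn fun j : Fin L => D (σ j)).prod).trace) = 0 := by
  have hL0 : 0 < L := by omega
  funext σ
  simp only [Hper, Pi.zero_apply]
  -- periodic extension
  set s : (Fin L → Fin m) → ℕ → Fin m := fun ρ a => ρ ⟨a % L, Nat.mod_lt _ hL0⟩ with hs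
  have hper : ∀ ρ a, s ρ (a + L) = s ρ a := by
    intro ρ a
    simp [hs]
  have hP : ∀ (ρ : Fin L → Fin m) (k : ℕ), ((List.ofFn fun j : Fin L => D (ρ j)).prod).trace
      = (WW (fun a => D (s ρ a)) k L).trace := by
    intro ρ k
    rw [WW_trace _ L hL0 (fun a => by simp only [hper]) k]
    simp only [WW, hs, zero_add]
    congr 3
    funext j
    congr 2
    apply Fin.ext
    simp [Nat.mod_eq_of_lt j.isLt]
  set T : ℕ → ℝ := fun k => (X (fun j : Fin (r - 1) => s σ (k + (j : ℕ))) *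
    WW (fun a => D (s σ a)) (k + (r - 1)) (L - r + 1)).trace with hT
  have main : ∀ k : ℕ, ∑ τ : Fin r → Fin m,
      h (fun j => σ ⟨(k + (j : ℕ)) % L, Nat.mod_lt _ hL0⟩) τ *
      ((List.ofFn fun j : Fin L => D (updateConfig L m r σ k τ j)).prod).trace
      = T k - T (k + 1) := by
    intro k
    have e1 : ∀ τ : Fin r → Fin m,
        ((List.ofFn fun j : Fin L => D (updateConfig L m r σ k τ j)).prod).trace
        = ((List.ofFn fun j => D (τ j)).prod * WW (fun a => D (s σ a)) (k + r) (L - r)).trace := by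
      intro τ
      rw [hP _ k, show WW (fun a => D (s (updateConfig L m r σ k τ) a)) k L =
        WW (fun a => D (s (updateConfig L m r σ k τ) a)) k (r + (L - r)) by
          congr 1; omega, WW_add]
      congr 2
      · simp only [WW, hs]
        congr 2
        funext j
        rw [update_at L m r hL σ k τ j (by omega)]
        simp
      · apply WW_congr
        intro j hj
        simp only [hs, add_assoc]
        rw [update_at L m r hL σ k τ (r + j) (by omega)]
        simp
    simp only [e1]
    have e2 := hbulk (fun j => s σ (k + (j : ℕ)))
    have e3 := congrArg (fun M => (M * WW (fun a => D (s σ a)) (k + r) (L - r)).trace) e2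
    simp only [Finset.sum_mul, Matrix.trace_sum, Matrix.smul_mul, Matrix.trace_smul,
      smul_eq_mul, sub_mul, Matrix.trace_sub] at e3
    refine e3.trans ?_
    simp only [hT]
    congr 1
    · rw [WW_succ, mul_assoc, show k + (r - 1) + 1 = k + r by omega]
    · rw [WW_add, WW_one, show k + 1 + (r - 1) = k + r by omega,
        show k + r + (L - r) = k + L by omega, hper, mul_assoc, Matrix.trace_mul_comm, mul_assoc]
      simp only [add_zero, add_assoc, add_comm 1]
  rw [Fin.sum_univ_eq_sum_range (fun k => ∑ τ : Fin r → Fin m,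
      h (fun j => σ ⟨(k + (j : ℕ)) % L, Nat.mod_lt _ hL0⟩) τ *
      ((List.ofFn fun j : Fin L => D (updateConfig L m r σ k τ j)).prod).trace) L]
  simp only [main]
  rw [Finset.sum_range_sub']
  have : T L = T 0 := by
    simp only [hT]
    congr 2
    · congr 1
      funext j
      rw [add_comm L, hper, zero_add]
    · apply WW_congr
      intro j hj
      rw [show L + (r - 1) + j = 0 + (r - 1) + j + L by omega, hper]
  rw [this, sub_self]
end
end

section
/- (Proposition A, part (ii); generalized Krebs–Sandow cancelling mechanism, boundary case.) Let m ≥ 1, r ≥ 2, n ≥ 1, let h be a local transition matrix of range r on m states, and let h_left, h_right be local transition matrices of range r−1. Suppose there exist n×n real matrices D_0, …, D_{m−1} and, for every (r−1)-tuple i, an n×n real matrix X_i, satisfying the bulk relations: for every r-tuple (i_1,…,i_r), Σ_{τ=(τ_1,…,τ_r)} h[(i_1,…,i_r), τ] · D_{τ_1} ⋯ D_{τ_r} = X_{(i_1,…,i_{r−1})} D_{i_r} − D_{i_1} X_{(i_2,…,i_r)}; and suppose there exist a row vector W ∈ ℝ^n and a column vector V ∈ ℝ^n such that for every (r−1)-tuple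 i = (i_1,…,i_{r−1}): Σ_{τ=(τ_1,…,τ_{r−1})} h_left[i, τ] · W D_{τ_1} ⋯ D_{τ_{r−1}} = −W X_i, and Σ_{τ=(τ_1,…,τ_{r−1})} h_right[i, τ] · D_{τ_1} ⋯ D_{τ_{r−1}} V = X_i V. Then for every L ≥ 2(r−1), the function P on configurations defined by P(σ) = W D_{σ(0)} D_{σ(1)} ⋯ D_{σ(L−1)} V satisfies H_L P = 0, i.e. the matrix-product state P is a zero-energy eigenvector of the stochastic Hamiltonian with boundary interactions. -/
open Finset

noncomputable section

def segP {n : ℕ} (e : ℕ → Matrix (Fin n) (Fin n) ℝ) (a l : ℕ) : Matrix (Fin n) (Fin n) ℝ :=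
  (List.ofFn fun j : Fin l => e (a + j)).prod

lemma segP_zero {n : ℕ} (e : ℕ → Matrix (Fin n) (Fin n) ℝ) (a : ℕ) : segP e a 0 = 1 := by
  simp [segP]

lemma segP_add {n : ℕ} (e : ℕ → Matrix (Fin n) (Fin n) ℝ) (a k l : ℕ) :
    segP e a (k + l) = segP e a k * segP e (a + k) l := by
  simp [segP, List.ofFn_add, add_assoc]

lemma segP_one {n : ℕ} (e : ℕ → Matrix (Fin n) (Fin n) ℝ) (a : ℕ) : segP e a 1 = e a := by
  simp [segP]

lemma segP_split {n : ℕ} (e : ℕ → Matrix (Fin n) (Fin n) ℝ) (L k q : ℕ) (hk : k + q ≤ L) :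
    segP e 0 L = segP e 0 k * segP e (0 + k) q * segP e (0 + (k + q)) (L - (k + q)) := by
  rw [← segP_add, ← segP_add, Nat.add_sub_cancel' hk]

lemma prod_update {m n : ℕ} (D : Fin m → Matrix (Fin n) (Fin n) ℝ) (L q k : ℕ) (hL : 0 < L)
    (σ : Fin L → Fin m) (τ : Fin q → Fin m) (hk : k + q ≤ L) :
    (List.ofFn fun j : Fin L => D (updateConfig L m q σ k τ j)).prod
      = segP (fun i => D (σ ⟨i % L, Nat.mod_lt _ hL⟩)) 0 k
        * (List.ofFn fun j => D (τ j)).prod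
        * segP (fun i => D (σ ⟨i % L, Nat.mod_lt _ hL⟩)) (k + q) (L - (k + q)) := by
  have key : (List.ofFn fun j : Fin L => D (updateConfig L m q σ k τ j)).prod
      = segP (fun i => D (updateConfig L m q σ k τ ⟨i % L, Nat.mod_lt _ hL⟩)) 0 L := by
    unfold segP
    congr 2
    funext j
    congr 2
    ext
    simp [Nat.mod_eq_of_lt j.isLt]
  rw [key]
  rw [segP_split _ L k q hk]
  congr 1
  · congr 1
    · unfold segP
      congr 2
      funext j
      have hj := j.isLt
      beta_reduce
      congr 1
      unfold updateConfig
      rw [dif_neg]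
      rintro ⟨x, hx⟩
      have hx2 := x.isLt
      simp only at hx
      rw [Nat.mod_eq_of_lt (by omega), Nat.mod_eq_of_lt (by omega)] at hx
      omega
    · unfold segP
      congr 2
      funext j
      have hj := j.isLt
      beta_reduce
      congr 1
      have hex : ∃ x : Fin q, (0 + k + (j : ℕ)) % L = (k + (x : ℕ)) % L := ⟨j, by simp⟩
      unfold updateConfig
      rw [dif_pos hex]
      congr 1
      have hx := hex.choose_spec
      have hx2 := hex.choose.isLt
      generalize hex.choose = y at hx hx2 ⊢
      rw [Nat.mod_eq_of_lt (by omega), Nat.mod_eq_of_lt (by omega)] at hx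
      ext
      omega
  · unfold segP
    congr 2
    · funext j
      have hj := j.isLt
      simp only [Nat.zero_add]
      congr 1
      unfold updateConfig
      rw [dif_neg]
      rintro ⟨x, hx⟩
      have hx2 := x.isLt
      simp only at hx
      rw [Nat.mod_eq_of_lt (by omega), Nat.mod_eq_of_lt (by omega)] at hx
      omega

open Matrix in
lemma sum_pull {n : ℕ} {ι : Type} [Fintype ι] (c : ι → ℝ) (A B : Matrix (Fin n) (Fin n) ℝ)
    (P : ι → Matrix (Fin n) (Fin n) ℝ) (W V : Fin n → ℝ) :
    ∑ t, c t * (W ⬝ᵥ Matrix.mulVec (A * P t * B) V)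
      = W ⬝ᵥ Matrix.mulVec (A * (∑ t, c t • P t) * B) V := by
  simp [Finset.mul_sum, Finset.sum_mul, Matrix.sum_mulVec, dotProduct_sum,
    Matrix.smul_mulVec]

open Matrix in
/-- **Proposition A, part (ii)** (generalized Krebs–Sandow cancelling mechanism, boundary
case): if matrices `D_i`, `X_i` satisfy the bulk cancelling mechanism and vectors `W`, `V`
satisfy the boundary cancelling mechanism for boundary interactions `hl`, `hr` of range
`r-1`, then the matrix-product state `P(σ) = W D_{σ 0} ⋯ D_{σ (L-1)} V` is a zero-energy
eigenvector of the stochastic Hamiltonian with boundary interactions, for `L ≥ 2(r-1)`. -/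
theorem prop_A_boundary (m r n L : ℕ) (hm : 1 ≤ m) (hr : 2 ≤ r) (hn : 1 ≤ n)
    (hL : 2 * (r - 1) ≤ L)
    (h : (Fin r → Fin m) → (Fin r → Fin m) → ℝ)
    (hl hrt : (Fin (r - 1) → Fin m) → (Fin (r - 1) → Fin m) → ℝ)
    (D : Fin m → Matrix (Fin n) (Fin n) ℝ)
    (X : (Fin (r - 1) → Fin m) → Matrix (Fin n) (Fin n) ℝ)
    (W V : Fin n → ℝ)
    (hbulk : ∀ i : Fin r → Fin m,
      ∑ τ : Fin r → Fin m, h i τ • (List.ofFn fun j => D (τ j)).prod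
        = X (fun j : Fin (r - 1) => i ⟨(j : ℕ), by have := j.isLt; omega⟩) *
            D (i ⟨r - 1, by omega⟩)
          - D (i ⟨0, by omega⟩) *
            X (fun j : Fin (r - 1) => i ⟨(j : ℕ) + 1, by have := j.isLt; omega⟩))
    (hleft : ∀ i : Fin (r - 1) → Fin m,
      ∑ τ : Fin (r - 1) → Fin m,
        hl i τ • Matrix.vecMul W ((List.ofFn fun j => D (τ j)).prod)
          = -Matrix.vecMul W (X i))
    (hright : ∀ i : Fin (r - 1) → Fin m,
      ∑ τ : Fin (r - 1) → Fin m,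
        hrt i τ • Matrix.mulVec ((List.ofFn fun j => D (τ j)).prod) V
          = Matrix.mulVec (X i) V) :
    Hopen L m r (by omega) h hl hrt
      (fun σ => W ⬝ᵥ Matrix.mulVec ((List.ofFn fun j : Fin L => D (σ j)).prod) V) = 0 := by
  obtain ⟨q, rfl⟩ : ∃ q, r = q + 1 := ⟨r - 1, by omega⟩
  simp only [Nat.add_sub_cancel] at *
  have hL0 : 0 < L := by omega
  funext σ
  set e : ℕ → Matrix (Fin n) (Fin n) ℝ := fun i => D (σ ⟨i % L, Nat.mod_lt _ hL0⟩) with he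
  let Y : ℕ → Matrix (Fin n) (Fin n) ℝ := fun k =>
    X (fun j : Fin q => σ ⟨(k + (j : ℕ)) % L, Nat.mod_lt _ hL0⟩)
  let F : ℕ → ℝ := fun k =>
    W ⬝ᵥ Matrix.mulVec (segP e 0 k * Y k * segP e (k + q) (L - (k + q))) V
  have h1 : (∑ τ : Fin q → Fin m,
      hl (fun j => σ ⟨(j : ℕ) % L, Nat.mod_lt _ hL0⟩) τ *
        (W ⬝ᵥ Matrix.mulVec
          ((List.ofFn fun j : Fin L => D (updateConfig L m q σ 0 τ j)).prod) V)) = - F 0 := by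
    have hh := hleft (fun j => σ ⟨(j : ℕ) % L, Nat.mod_lt _ hL0⟩)
    have hh2 := congrArg (fun w => w ⬝ᵥ Matrix.mulVec (segP e (0 + q) (L - (0 + q))) V) hh
    simp only [prod_update D L q 0 hL0 σ _ (by omega)]
    simp only [F, Y, segP_zero, one_mul, Nat.zero_add] at hh2 ⊢
    simp only [sum_dotProduct, smul_dotProduct, neg_dotProduct, smul_eq_mul,
      ← Matrix.dotProduct_mulVec, Matrix.mulVec_mulVec] at hh2
    exact hh2
  have h3 : (∑ τ : Fin q → Fin m,
      hrt (fun j => σ ⟨((L - q) + (j : ℕ)) % L, Nat.mod_lt _ hL0⟩) τ *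
        (W ⬝ᵥ Matrix.mulVec
          ((List.ofFn fun j : Fin L => D (updateConfig L m q σ (L - q) τ j)).prod) V))
        = F (L - q) := by
    have hh := hright (fun j => σ ⟨((L - q) + (j : ℕ)) % L, Nat.mod_lt _ hL0⟩)
    have hh2 := congrArg (fun w => W ⬝ᵥ Matrix.mulVec (segP e 0 (L - q)) w) hh
    simp only [prod_update D L q (L - q) hL0 σ _ (by omega)]
    have e0 : L - (L - q + q) = 0 := by omega
    simp only [F, Y, e0, segP_zero, mul_one] at hh2 ⊢
    simp only [Matrix.mulVec_sum, dotProduct_sum, Matrix.mulVec_smul, dotProduct_smul,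
      smul_eq_mul, Matrix.mulVec_mulVec] at hh2
    exact hh2
  have h2 : ∀ k ∈ Finset.range (L - (q + 1) + 1), (∑ τ : Fin (q + 1) → Fin m,
      h (fun j => σ ⟨(k + (j : ℕ)) % L, Nat.mod_lt _ hL0⟩) τ *
        (W ⬝ᵥ Matrix.mulVec
          ((List.ofFn fun j : Fin L => D (updateConfig L m (q + 1) σ k τ j)).prod) V))
        = F k - F (k + 1) := by
    intro k hk
    rw [Finset.mem_range] at hk
    simp only [prod_update D L (q + 1) k hL0 σ _ (by omega)]
    rw [sum_pull, hbulk]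
    have a1 : segP e (k + q) (L - (k + q))
        = e (k + q) * segP e (k + (q + 1)) (L - (k + (q + 1))) := by
      rw [show L - (k + q) = 1 + (L - (k + (q + 1))) by omega, segP_add, segP_one]
      rfl
    have a2 : segP e 0 (k + 1) = segP e 0 k * e k := by
      rw [segP_add, segP_one, Nat.zero_add]
    have a3 : k + 1 + q = k + (q + 1) := by omega
    have a4 : Y (k + 1) = X (fun j : Fin q =>
        σ ⟨(k + ((j : ℕ) + 1)) % L, Nat.mod_lt _ hL0⟩) := by
      simp only [Y]
      congr 1
      funext j
      congr 2
      congr 1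
      omega
    simp only [F]
    rw [a1, a2, a3, a4, ← dotProduct_sub, ← Matrix.sub_mulVec]
    simp only [Y, e, Nat.add_zero]
    congr 2
    noncomm_ring
  unfold Hopen
  simp only [Nat.add_sub_cancel]
  rw [Finset.sum_congr rfl h2, Finset.sum_range_sub',
    show L - (q + 1) + 1 = L - q by omega]
  refine (congrArg₂ (· + ·) (congrArg₂ (· + ·) h1 rfl) h3).trans ?_
  simp only [Pi.zero_apply]
  ring
end
end

section
/- (Proposition B; ubiquity of matrix-product states for boundary interactions.) Let m ≥ 1, r ≥ 2, let h be a local transition matrix of range r on m states and h_left, h_right local transition matrices of range r−1, all stochastic in the sense that every off-diagonal entry is nonpositive and every column sums to zero (i.e. h[τ',τ] ≤ 0 for τ' ≠ τ and Σ_{τ'} h[τ',τ] = 0, and likewise for h_left, h_right). Suppose that for every L ≥ 2(r−1) the kernel of the stochastic Hamiltonian H_L (acting on real-valued functions of configurations of L sites) is one-dimensional, i.e. the stationary state is unique for every system length. Then there exist a real vector space A, linear maps D_0, …, D_{m−1} : A → A, for every (r−1)-tuple i a linear map X_i : A → A, a vector V ∈ A, and a linear functional W : A → ℝ, such that: (a)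 the bulk cancelling relations hold: for every r-tuple (i_1,…,i_r), Σ_{τ=(τ_1,…,τ_r)} h[(i_1,…,i_r), τ] · (D_{τ_1} ∘ ⋯ ∘ D_{τ_r}) = X_{(i_1,…,i_{r−1})} ∘ D_{i_r} − D_{i_1} ∘ X_{(i_2,…,i_r)}; (b) the boundary cancelling relations hold: for every (r−1)-tuple i, Σ_{τ} h_left[i, τ] · (W ∘ D_{τ_1} ∘ ⋯ ∘ D_{τ_{r−1}}) = −W ∘ X_i and Σ_{τ} h_right[i, τ] · (D_{τ_1} ∘ ⋯ ∘ D_{τ_{r−1}})(V) = X_i(V); and (c) for every L ≥ 2(r−1), the function P_L on configurations defined by P_L(σ) = W(D_{σ(0)}(D_{σ(1)}(⋯(D_{σ(L−1)}(V))⋯)))) is a nonzero element of the kernel of H_L, i.e. the unique stationary state can be written as a matrix-product state. -/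
open Finset

noncomputable section

/-- Data for a matrix-product representation: a real vector space `A`, operators
`D_i`, `X_i` on `A`, a linear functional `W` and a vector `V`. -/
structure MPSRep (m r : ℕ) where
  A : Type
  [addCommGroup : AddCommGroup A]
  [module : Module ℝ A]
  D : Fin m → (A →ₗ[ℝ] A)
  X : (Fin (r - 1) → Fin m) → (A →ₗ[ℝ] A)
  W : A →ₗ[ℝ] ℝ
  V : A

attribute [instance] MPSRep.addCommGroup MPSRep.module


def extT (m r : ℕ) (I : Fin (r - 1) → Fin m) (j : Fin m) : Fin r → Fin m :=
  fun t => if ht : (t : ℕ) < r - 1 then I ⟨t, ht⟩ else j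

def shiftT (m r : ℕ) (I : Fin (r - 1) → Fin m) (j : Fin m) : Fin (r - 1) → Fin m :=
  fun t => extT m r I j ⟨(t : ℕ) + 1, by have := t.isLt; omega⟩

def Dop (m : ℕ) (i : Fin m) : (List (Fin m) →₀ ℝ) →ₗ[ℝ] (List (Fin m) →₀ ℝ) :=
  Finsupp.lmapDomain ℝ ℝ (List.cons i)

def Xw (m r : ℕ) (hr : 2 ≤ r) (h : (Fin r → Fin m) → (Fin r → Fin m) → ℝ)
    (hrt : (Fin (r - 1) → Fin m) → (Fin (r - 1) → Fin m) → ℝ) :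
    List (Fin m) → (Fin (r - 1) → Fin m) → (List (Fin m) →₀ ℝ)
  | [], I => ∑ τ : Fin (r - 1) → Fin m, hrt I τ • Finsupp.single (List.ofFn τ) (1 : ℝ)
  | j :: w, I => (∑ τ : Fin r → Fin m,
        h (extT m r I j) τ • Finsupp.single (List.ofFn τ ++ w) (1 : ℝ))
      + Dop m (I ⟨0, by omega⟩) (Xw m r hr h hrt w (shiftT m r I j))

def Xop (m r : ℕ) (hr : 2 ≤ r) (h : (Fin r → Fin m) → (Fin r → Fin m) → ℝ)
    (hrt : (Fin (r - 1) → Fin m) → (Fin (r - 1) → Fin m) → ℝ) (I : Fin (r - 1) → Fin m) :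
    (List (Fin m) →₀ ℝ) →ₗ[ℝ] (List (Fin m) →₀ ℝ) :=
  Finsupp.linearCombination ℝ (fun w => Xw m r hr h hrt w I)

def windowT (m s : ℕ) (d : Fin m) (u : List (Fin m)) (k : ℕ) : Fin s → Fin m :=
  fun j => u.getD (k + j) d

def replT (m s : ℕ) (u : List (Fin m)) (k : ℕ) (τ : Fin s → Fin m) : List (Fin m) :=
  u.take k ++ (List.ofFn τ ++ u.drop (k + s))

lemma foldr_D (m n : ℕ) (τ : Fin n → Fin m) (w : List (Fin m)) :
    ((List.ofFn fun j => Dop m (τ j)).foldr LinearMap.comp LinearMap.id)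
      (Finsupp.single w (1 : ℝ)) = Finsupp.single (List.ofFn τ ++ w) 1 := by
  induction n with
  | zero => simp
  | succ n ih =>
    rw [List.ofFn_succ, List.ofFn_succ, List.foldr_cons, LinearMap.comp_apply, ih]
    simp [Dop]

lemma ofFn_extT (m r : ℕ) (hr : 2 ≤ r) (I : Fin (r - 1) → Fin m) (j : Fin m) :
    List.ofFn (extT m r I j) = List.ofFn I ++ [j] := by
  apply List.ext_getElem
  · simp; omega
  · intro n h1 h2
    simp only [List.getElem_ofFn, extT, List.getElem_append, List.length_ofFn]
    split_ifs <;> simp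

lemma cons_shiftT (m r : ℕ) (hr : 2 ≤ r) (I : Fin (r - 1) → Fin m) (j : Fin m) :
    I ⟨0, by omega⟩ :: List.ofFn (shiftT m r I j) = List.ofFn I ++ [j] := by
  rw [← ofFn_extT m r hr]
  apply List.ext_getElem
  · simp; omega
  · intro n h1 h2
    cases n with
    | zero =>
      have : 0 < r - 1 := by omega
      simp [extT, this]
    | succ n => simp [shiftT]

lemma windowT_ofFn (m s : ℕ) (d : Fin m) (I : Fin s → Fin m) (w : List (Fin m)) :
    windowT m s d (List.ofFn I ++ w) 0 = I := by
  funext j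
  simp only [windowT, Nat.zero_add]
  rw [List.getD_eq_getElem _ _ (by simp; omega), List.getElem_append_left (by simp)]
  simp

lemma replT_ofFn (m s : ℕ) (I τ : Fin s → Fin m) (w : List (Fin m)) :
    replT m s (List.ofFn I ++ w) 0 τ = List.ofFn τ ++ w := by
  simp [replT]

lemma windowT_cons (m s : ℕ) (d a : Fin m) (u : List (Fin m)) (k : ℕ) :
    windowT m s d (a :: u) (k + 1) = windowT m s d u k := by
  funext j
  simp [windowT, show k + 1 + (j : ℕ) = (k + j) + 1 by omega]

lemma replT_cons (m s : ℕ) (a : Fin m) (u : List (Fin m)) (k : ℕ) (τ : Fin s → Fin m) :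
    replT m s (a :: u) (k + 1) τ = a :: replT m s u k τ := by
  simp [replT, show k + 1 + s = (k + s) + 1 by omega]

lemma P_Xw (m r : ℕ) (hr : 2 ≤ r) (d : Fin m) (h : (Fin r → Fin m) → (Fin r → Fin m) → ℝ)
    (hrt : (Fin (r - 1) → Fin m) → (Fin (r - 1) → Fin m) → ℝ)
    (w : List (Fin m)) : ∀ (P : List (Fin m) → ℝ) (I : Fin (r - 1) → Fin m),
    Finsupp.linearCombination ℝ P (Xw m r hr h hrt w I)
      = (∑ k ∈ Finset.range w.length, ∑ τ : Fin r → Fin m,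
          h (windowT m r d (List.ofFn I ++ w) k) τ * P (replT m r (List.ofFn I ++ w) k τ))
        + ∑ τ : Fin (r - 1) → Fin m,
          hrt (windowT m (r - 1) d (List.ofFn I ++ w) w.length) τ
            * P (replT m (r - 1) (List.ofFn I ++ w) w.length τ) := by
  induction w with
  | nil =>
    intro P I
    simp only [Xw, List.length_nil, windowT_ofFn, replT_ofFn]
    simp [Finsupp.linearCombination_single]
  | cons j w ih =>
    intro P I
    have e1 : List.ofFn I ++ j :: w = List.ofFn (extT m r I j) ++ w := by
      rw [ofFn_extT m r hr]; simp
    have e2 : List.ofFn I ++ j :: w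
        = I ⟨0, by omega⟩ :: (List.ofFn (shiftT m r I j) ++ w) := by
      rw [← List.cons_append, cons_shiftT m r hr]; simp
    have e3 : ∀ v, Finsupp.linearCombination ℝ P (Dop m (I ⟨0, by omega⟩) v)
        = Finsupp.linearCombination ℝ (fun u => P (I ⟨0, by omega⟩ :: u)) v := by
      intro v
      simp only [Dop, Finsupp.lmapDomain_apply, Finsupp.linearCombination_mapDomain]
      rfl
    rw [Xw, map_add, e3, ih, List.length_cons, Finset.sum_range_succ', ← add_assoc]
    conv_rhs => 
      enter [1, 2]
      rw [e1]
    simp only [windowT_ofFn, replT_ofFn]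
    rw [e2]
    simp only [windowT_cons, replT_cons]
    simp only [map_sum, map_smul, Finsupp.linearCombination_single, smul_eq_mul, one_mul]
    ring

lemma ofFn_update (L m s : ℕ) (σ : Fin L → Fin m) (k : ℕ) (τ : Fin s → Fin m)
    (hk : k + s ≤ L) :
    List.ofFn (updateConfig L m s σ k τ) = replT m s (List.ofFn σ) k τ := by
  apply List.ext_getElem
  · simp [replT]; omega
  · intro n h1 h2
    have hn : n < L := by simpa using h1
    simp only [List.getElem_ofFn, updateConfig, replT]
    split_ifs with hj
    · have hs := hj.choose_spec
      have hlt := hj.choose.isLt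
      rw [Nat.mod_eq_of_lt (by omega)] at hs
      have hs : n = k + (hj.choose : ℕ) := hs
      rw [List.getElem_append_right (by simp; omega), List.getElem_append_left (by simp; omega)]
      simp only [List.getElem_ofFn]
      congr 1
      apply Fin.ext
      simp only [List.length_take, List.length_ofFn]
      rw [min_eq_left (by omega)]
      omega
    · by_cases h3 : n < k
      · rw [List.getElem_append_left (by simp; omega)]
        simp
      · have h4 : k + s ≤ n := by
          by_contra hc
          apply hj
          refine ⟨⟨n - k, by omega⟩, ?_⟩
          simp only
          rw [Nat.mod_eq_of_lt (by omega)]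
          omega
        rw [List.getElem_append_right (by simp; omega), List.getElem_append_right (by simp; omega)]
        simp only [List.getElem_drop, List.getElem_ofFn, List.length_take, List.length_ofFn]
        congr 1
        apply Fin.ext
        simp only
        rw [min_eq_left (by omega)]
        omega

lemma window_eq (L m s : ℕ) (d : Fin m) (hL : 0 < L) (σ : Fin L → Fin m) (k : ℕ)
    (hk : k + s ≤ L) :
    (fun j : Fin s => σ ⟨(k + (j : ℕ)) % L, Nat.mod_lt _ hL⟩)
      = windowT m s d (List.ofFn σ) k := by
  funext j
  have := j.isLt
  simp only [windowT, Nat.mod_eq_of_lt (show k + (j : ℕ) < L by omega)]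
  rw [List.getD_eq_getElem _ _ (by simp; omega)]
  simp

lemma Hopen_list (L m r : ℕ) (hr : 2 ≤ r) (d : Fin m) (hL : 0 < L) (hLr : r ≤ L)
    (hb : (Fin r → Fin m) → (Fin r → Fin m) → ℝ)
    (hl hrt : (Fin (r - 1) → Fin m) → (Fin (r - 1) → Fin m) → ℝ)
    (P : List (Fin m) → ℝ) (σ : Fin L → Fin m) :
    Hopen L m r hL hb hl hrt (fun σ => P (List.ofFn σ)) σ =
      (∑ τ : Fin (r - 1) → Fin m,
        hl (windowT m (r - 1) d (List.ofFn σ) 0) τ * P (replT m (r - 1) (List.ofFn σ) 0 τ))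
      + (∑ k ∈ Finset.range (L - r + 1), ∑ τ : Fin r → Fin m,
        hb (windowT m r d (List.ofFn σ) k) τ * P (replT m r (List.ofFn σ) k τ))
      + (∑ τ : Fin (r - 1) → Fin m,
        hrt (windowT m (r - 1) d (List.ofFn σ) (L - (r - 1))) τ
          * P (replT m (r - 1) (List.ofFn σ) (L - (r - 1)) τ)) := by
  simp only [Hopen]
  congr 1
  · congr 1
    · refine Finset.sum_congr rfl fun τ _ => ?_
      rw [ofFn_update _ _ _ _ _ _ (by omega), ← window_eq L m (r - 1) d hL σ 0 (by omega)]
      simp only [Nat.zero_add]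
    · refine Finset.sum_congr rfl fun k hk => Finset.sum_congr rfl fun τ _ => ?_
      have := Finset.mem_range.1 hk
      rw [ofFn_update _ _ _ _ _ _ (by omega), ← window_eq L m r d hL σ k (by omega)]
  · refine Finset.sum_congr rfl fun τ _ => ?_
    rw [ofFn_update _ _ _ _ _ _ (by omega), ← window_eq L m (r - 1) d hL σ _ (by omega)]

/-- **Proposition B** (ubiquity of matrix-product states for boundary interactions):
for a stochastic process with bulk interaction of range `r` and boundary interactions of
range `r-1` whose stationary state is unique (one-dimensional kernel of `H_L`) for every
system length `L ≥ 2(r-1)`, there exist a vector space `A`, operators `D_i`, `X_i`, a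
functional `W` and a vector `V` satisfying the cancelling mechanism, such that the unique
stationary state is the (nonzero) matrix-product state
`P_L(σ) = W (D_{σ 0} (⋯ (D_{σ (L-1)} V)))` for every `L ≥ 2(r-1)`. -/
theorem prop_B (m r : ℕ) (hm : 1 ≤ m) (hr : 2 ≤ r)
    (h : (Fin r → Fin m) → (Fin r → Fin m) → ℝ)
    (hl hrt : (Fin (r - 1) → Fin m) → (Fin (r - 1) → Fin m) → ℝ)
    (hoff : ∀ a b, a ≠ b → h a b ≤ 0) (hcol : ∀ b, ∑ a, h a b = 0)
    (hoffl : ∀ a b, a ≠ b → hl a b ≤ 0) (hcoll : ∀ b, ∑ a, hl a b = 0)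
    (hoffr : ∀ a b, a ≠ b → hrt a b ≤ 0) (hcolr : ∀ b, ∑ a, hrt a b = 0)
    (huniq : ∀ L, ∀ hLu : 2 * (r - 1) ≤ L,
      ∃ f : (Fin L → Fin m) → ℝ, f ≠ 0 ∧
        Hopen L m r (by omega) h hl hrt f = 0 ∧
        ∀ g : (Fin L → Fin m) → ℝ,
          Hopen L m r (by omega) h hl hrt g = 0 → ∃ c : ℝ, g = c • f) :
    ∃ R : MPSRep m r,
      (∀ i : Fin r → Fin m,
        ∑ τ : Fin r → Fin m,
          h i τ • (List.ofFn fun j => R.D (τ j)).foldr LinearMap.comp LinearMap.id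
        = (R.X (fun j : Fin (r - 1) =>
              i ⟨(j : ℕ), by have := j.isLt; omega⟩)).comp (R.D (i ⟨r - 1, by omega⟩))
          - (R.D (i ⟨0, by omega⟩)).comp
              (R.X (fun j : Fin (r - 1) => i ⟨(j : ℕ) + 1, by have := j.isLt; omega⟩)))
      ∧ (∀ i : Fin (r - 1) → Fin m,
        ∑ τ : Fin (r - 1) → Fin m,
          hl i τ •
            (R.W.comp ((List.ofFn fun j => R.D (τ j)).foldr LinearMap.comp LinearMap.id))
          = -(R.W.comp (R.X i)))
      ∧ (∀ i : Fin (r - 1) → Fin m,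
        ∑ τ : Fin (r - 1) → Fin m,
          hrt i τ •
            (((List.ofFn fun j => R.D (τ j)).foldr LinearMap.comp LinearMap.id) R.V)
          = R.X i R.V)
      ∧ (∀ L, ∀ hL : 2 * (r - 1) ≤ L,
        (fun σ : Fin L → Fin m =>
            R.W (((List.ofFn fun j : Fin L => R.D (σ j)).foldr LinearMap.comp
              LinearMap.id) R.V)) ≠ 0
        ∧ Hopen L m r (by omega) h hl hrt
            (fun σ : Fin L → Fin m =>
              R.W (((List.ofFn fun j : Fin L => R.D (σ j)).foldr LinearMap.comp
                LinearMap.id) R.V)) = 0) := by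
  classical
  choose f hf0 hfH _ using huniq
  obtain ⟨d⟩ : Nonempty (Fin m) := ⟨⟨0, hm⟩⟩
  let P : List (Fin m) → ℝ := fun u =>
    if hu : 2 * (r - 1) ≤ u.length then f u.length hu (fun i => u[i]) else 0
  have hP0 : ∀ u : List (Fin m), u.length < 2 * (r - 1) → P u = 0 := by
    intro u hu
    simp only [P]
    rw [dif_neg (by omega)]
  have hPaux : ∀ (u : List (Fin m)) (L : ℕ) (hlen : u.length = L) (hL : 2 * (r - 1) ≤ L)
      (σ : Fin L → Fin m), (∀ i : Fin L, u[i] = σ i) → P u = f L hL σ := by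
    intro u L hlen hL σ hσ
    subst hlen
    simp only [P]
    rw [dif_pos hL]
    congr 1
    funext i
    exact hσ i
  have hP : ∀ (L : ℕ) (hL : 2 * (r - 1) ≤ L), (fun σ => P (List.ofFn σ)) = f L hL := by
    intro L hL
    funext σ
    exact hPaux _ L (by simp) hL σ (by simp)
  refine ⟨{ A := List (Fin m) →₀ ℝ
            D := Dop m
            X := Xop m r hr h hrt
            W := Finsupp.linearCombination ℝ P
            V := Finsupp.single [] 1 }, ?_, ?_, ?_, ?_⟩
  · intro i
    apply Finsupp.lhom_ext'
    intro w
    apply LinearMap.ext_ring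
    simp only [LinearMap.comp_apply, LinearMap.sub_apply, LinearMap.sum_apply,
      LinearMap.smul_apply, Finsupp.lsingle_apply, foldr_D]
    have hD : ∀ a : Fin m, Dop m a (Finsupp.single w (1 : ℝ)) = Finsupp.single (a :: w) 1 := by
      intro a; simp [Dop]
    rw [hD]
    simp only [Xop, Finsupp.linearCombination_single, one_smul]
    rw [Xw]
    have e1 : extT m r (fun j : Fin (r - 1) => i ⟨(j : ℕ), by have := j.isLt; omega⟩)
        (i ⟨r - 1, by omega⟩) = i := by
      funext t
      simp only [extT]
      split_ifs with ht
      · rfl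
      · congr 1
        apply Fin.ext
        have := t.isLt
        simp only
        omega
    have e2 : shiftT m r (fun j : Fin (r - 1) => i ⟨(j : ℕ), by have := j.isLt; omega⟩)
        (i ⟨r - 1, by omega⟩) = fun j : Fin (r - 1) => i ⟨(j : ℕ) + 1, by have := j.isLt; omega⟩ := by
      funext t
      simp only [shiftT]
      exact congrFun e1 _
    rw [e1, e2]
    abel
  · intro i
    apply Finsupp.lhom_ext'
    intro w
    apply LinearMap.ext_ring
    simp only [LinearMap.comp_apply, LinearMap.neg_apply, LinearMap.sum_apply,
      LinearMap.smul_apply, Finsupp.lsingle_apply, foldr_D, Xop,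
      Finsupp.linearCombination_single, one_smul, smul_eq_mul, one_mul]
    rw [P_Xw m r hr d]
    have hlenu : (List.ofFn i ++ w).length = r - 1 + w.length := by simp
    by_cases hw : r - 1 ≤ w.length
    · obtain ⟨L, hLdef⟩ : ∃ L, L = r - 1 + w.length := ⟨_, rfl⟩
      have hL : 2 * (r - 1) ≤ L := by omega
      have hσ : ∃ σ : Fin L → Fin m, List.ofFn σ = List.ofFn i ++ w := by
        refine ⟨fun t => (List.ofFn i ++ w)[(t : ℕ)]'(by have := t.isLt; omega), ?_⟩
        apply List.ext_getElem
        · simp; omega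
        · intro n h1 h2
          simp
      obtain ⟨σ, hσ⟩ := hσ
      have key := Hopen_list L m r hr d (by omega) (by omega) h hl hrt P σ
      rw [hP L hL, hfH L hL, hσ] at key
      simp only [windowT_ofFn, replT_ofFn, Pi.zero_apply] at key
      rw [show L - r + 1 = w.length by omega, show L - (r - 1) = w.length by omega] at key
      linarith
    · have z1 : ∀ τ : Fin (r - 1) → Fin m, P (List.ofFn τ ++ w) = 0 := by
        intro τ
        apply hP0
        simp; omega
      have z2 : ∀ k ∈ Finset.range w.length, ∀ τ : Fin r → Fin m,
          P (replT m r (List.ofFn i ++ w) k τ) = 0 := by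
        intro k hk τ
        have := Finset.mem_range.1 hk
        apply hP0
        simp [replT]; omega
      have z3 : ∀ τ : Fin (r - 1) → Fin m,
          P (replT m (r - 1) (List.ofFn i ++ w) w.length τ) = 0 := by
        intro τ
        apply hP0
        simp [replT]; omega
      have z4 : (∑ k ∈ Finset.range w.length, ∑ τ : Fin r → Fin m,
          h (windowT m r d (List.ofFn i ++ w) k) τ * P (replT m r (List.ofFn i ++ w) k τ)) = 0 :=
        Finset.sum_eq_zero fun k hk => Finset.sum_eq_zero fun τ _ => by rw [z2 k hk τ, mul_zero]
      rw [z4]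
      simp [z1, z3]
  · intro i
    simp only [foldr_D, Xop, Finsupp.linearCombination_single, one_smul, List.append_nil]
    rw [Xw]
  · intro L hL
    simp only [foldr_D, Finsupp.linearCombination_single, one_smul, List.append_nil]
    rw [hP L hL]
    exact ⟨hf0 L hL, hfH L hL⟩
end
end

section
/- (Stationary state of model A with periodic boundary conditions is a product measure.) Let p1, p2 ≥ 0, ρ ∈ [0,1], and L ≥ 3. Let h be the local transition matrix of range 3 on 2 states of model A, and let H^(p)_L be the corresponding periodic stochastic Hamiltonian. Then the product (Bernoulli) function P on configurations, defined by P(σ) = Π_{k=0}^{L−1} w(σ(k)), where w(1) = ρ and w(0) = 1−ρ, satisfies H^(p)_L P = 0; i.e. the Bernoulli product measure with density ρ is a stationary state of model A on the ring of L sites. -/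
open Finset

noncomputable section

/-- The bulk transition rates of **model A**: `(1,0,0)→(0,1,0)` at rate `p1`,
`(1,0,1)→(0,1,1)` at rate `p1`, and `(1,0,0)→(0,0,1)` at rate `p2`
(state `1` = particle, state `0` = empty). -/
def rateA (p1 p2 : ℝ) : (Fin 3 → Fin 2) → (Fin 3 → Fin 2) → ℝ :=
  fun τ τ' =>
    if τ = ![1, 0, 0] ∧ τ' = ![0, 1, 0] then p1
    else if τ = ![1, 0, 1] ∧ τ' = ![0, 1, 1] then p1
    else if τ = ![1, 0, 0] ∧ τ' = ![0, 0, 1] then p2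
    else 0

/-- The local transition matrix of range 3 of model A. -/
def hA (p1 p2 : ℝ) : (Fin 3 → Fin 2) → (Fin 3 → Fin 2) → ℝ := rateToH (rateA p1 p2)
lemma upd_prod (L : ℕ) (hL : 3 ≤ L) (k : Fin L) (σ : Fin L → Fin 2) (w : Fin 2 → ℝ) :
    ∃ R : ℝ, (∀ τ : Fin 3 → Fin 2,
      ∏ i : Fin L, w (updateConfig L 2 3 σ (k : ℕ) τ i) = (w (τ 0) * w (τ 1) * w (τ 2)) * R) ∧
      ∏ i : Fin L, w (σ i) =
        (∏ j : Fin 3, w (σ ⟨((k : ℕ) + (j : ℕ)) % L, Nat.mod_lt _ k.pos⟩)) * R := by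
  have inj' : ∀ a b : Fin 3, ((k : ℕ) + (a : ℕ)) % L = ((k : ℕ) + (b : ℕ)) % L → a = b := by
    intro a b h
    have h' : (a : ℕ) ≡ (b : ℕ) [MOD L] := Nat.ModEq.add_left_cancel' _ h
    have := Nat.ModEq.eq_of_lt_of_lt h' (by omega) (by omega)
    exact Fin.ext this
  let e : Fin 3 → Fin L := fun j => ⟨((k : ℕ) + (j : ℕ)) % L, Nat.mod_lt _ k.pos⟩
  have inj : Function.Injective e := by
    intro a b h
    exact inj' a b (congrArg Fin.val h)
  refine ⟨∏ i ∈ (univ.image e)ᶜ, w (σ i), ?_, ?_⟩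
  · intro τ
    rw [← Finset.prod_mul_prod_compl (univ.image e), Finset.prod_image (fun a _ b _ h => inj h)]
    congr 1
    · rw [← Fin.prod_univ_three (fun j => w (τ j))]
      refine Finset.prod_congr rfl fun j _ => ?_
      congr 1
      have hex : ∃ j' : Fin 3, ((e j : Fin L) : ℕ) = ((k : ℕ) + (j' : ℕ)) % L := ⟨j, rfl⟩
      unfold updateConfig
      rw [dif_pos hex]
      congr 1
      exact (inj' _ _ hex.choose_spec).symm
    · refine Finset.prod_congr rfl fun i hi => ?_
      congr 1
      unfold updateConfig
      rw [dif_neg]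
      rintro ⟨j, hj⟩
      simp only [mem_compl, mem_image, mem_univ, true_and, not_exists] at hi
      exact hi j (Fin.ext hj.symm)
  · rw [← Finset.prod_mul_prod_compl (univ.image e), Finset.prod_image (fun a _ b _ h => inj h)]

lemma univ_cfg : (univ : Finset (Fin 3 → Fin 2)) =
    {![0,0,0], ![0,0,1], ![0,1,0], ![0,1,1], ![1,0,0], ![1,0,1], ![1,1,0], ![1,1,1]} := by
  decide

def occ (x : Fin 2) : ℝ := if x = 1 then 1 else 0

lemma local_id (p1 p2 : ℝ) (w : Fin 2 → ℝ) (a : Fin 3 → Fin 2) :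
    ∑ τ : Fin 3 → Fin 2, hA p1 p2 a τ * (w (τ 0) * w (τ 1) * w (τ 2)) =
      (p1 * (occ (a 0) - occ (a 1)) +
        p2 * (occ (a 0) - occ (a 2) - occ (a 0) * occ (a 1) + occ (a 1) * occ (a 2)))
        * (w (a 0) * w (a 1) * w (a 2)) := by
  have ha : a ∈ (univ : Finset (Fin 3 → Fin 2)) := mem_univ a
  rw [univ_cfg] at ha ⊢
  simp only [mem_insert, mem_singleton] at ha
  unfold hA rateToH
  simp only [Finset.sum_filter, univ_cfg]
  rcases ha with h | h | h | h | h | h | h | h <;> subst h <;>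
    simp [rateA, occ, Finset.sum_insert] <;> ring_nf <;> simp

/-- **Stationary state of model A with periodic boundary conditions**: the Bernoulli
product measure with density `ρ` (weight `ρ` for an occupied site, `1-ρ` for an empty
site) is a zero-energy eigenvector of the periodic stochastic Hamiltonian of model A
on a ring of `L ≥ 3` sites. -/
theorem modelA_periodic_product_measure (p1 p2 ρ : ℝ) (hp1 : 0 ≤ p1) (hp2 : 0 ≤ p2)
    (hρ : ρ ∈ Set.Icc (0 : ℝ) 1) (L : ℕ) (hL : 3 ≤ L) :
    Hper L 2 3 (hA p1 p2)
      (fun σ => ∏ k : Fin L, (if σ k = 1 then ρ else 1 - ρ)) = 0 := by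
  funext σ
  let w : Fin 2 → ℝ := fun x => if x = 1 then ρ else 1 - ρ
  let c : ℕ → ℝ := fun i => occ (σ ⟨i % L, Nat.mod_lt _ (by omega)⟩)
  let F : ℕ → ℝ := fun i => p1 * c i + p2 * (c i + c (i+1) - c i * c (i+1))
  have key : ∀ k : Fin L, ∑ τ : Fin 3 → Fin 2,
      hA p1 p2 (fun j => σ ⟨((k : ℕ) + (j : ℕ)) % L, Nat.mod_lt _ k.pos⟩) τ *
        ∏ i : Fin L, w (updateConfig L 2 3 σ (k : ℕ) τ i) =
      (F k - F (k + 1)) * ∏ i : Fin L, w (σ i) := by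
    intro k
    obtain ⟨R, h1, h2⟩ := upd_prod L hL k σ w
    simp only [h1, ← mul_assoc]
    rw [← Finset.sum_mul]
    have := local_id p1 p2 w (fun j => σ ⟨((k : ℕ) + (j : ℕ)) % L, Nat.mod_lt _ k.pos⟩)
    simp only [← mul_assoc] at this
    rw [this, h2, Fin.prod_univ_three]
    simp only [F, c, Fin.val_zero, Fin.val_one, Fin.val_two, add_zero, add_assoc, Nat.reduceAdd]
    ring
  change ∑ k : Fin L, ∑ τ : Fin 3 → Fin 2,
      hA p1 p2 (fun j => σ ⟨((k : ℕ) + (j : ℕ)) % L, Nat.mod_lt _ k.pos⟩) τ *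
        ∏ i : Fin L, w (updateConfig L 2 3 σ (k : ℕ) τ i) = 0
  rw [Finset.sum_congr rfl fun k _ => key k, ← Finset.sum_mul,
    Fin.sum_univ_eq_sum_range (fun k => F k - F (k + 1)) L, Finset.sum_range_sub']
  have hF : F L = F 0 := by
    simp only [F, c, Nat.mod_self, Nat.zero_mod, Nat.add_mod_left, Nat.zero_add]
  rw [hF, sub_self, zero_mul]
end
end

section
/- (Fundamental diagram of model A.) Let p1, p2 ≥ 0, ρ ∈ [0,1], L ≥ 3, and let μ be the Bernoulli product probability measure on configurations σ : Fin L → Fin 2 in which the sites are independent and each site is occupied (state 1) with probability ρ. For any three cyclically consecutive distinct sites k, k+1, k+2 (mod L), the stationary flow J = p1·μ({σ : σ(k)=1, σ(k+1)=0}) + 2·p2·μ({σ : σ(k)=1, σ(k+1)=0, σ(k+2)=0}) equals ρ(1−ρ)·[p1 + 2·p2·(1−ρ)]. -/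
open MeasureTheory

theorem aux_two {L : ℕ} (ν : Measure (Fin 2)) [IsProbabilityMeasure ν] (a b : Fin L)
    (hab : a ≠ b) :
    Measure.pi (fun _ : Fin L => ν) {σ | σ a = 1 ∧ σ b = 0} = ν {1} * ν {0} := by
  have h : {σ : Fin L → Fin 2 | σ a = 1 ∧ σ b = 0} = Set.univ.pi
      (fun i => if i = a then {1} else if i = b then {0} else Set.univ) := by
    ext σ
    simp only [Set.mem_setOf_eq, Set.mem_pi, Set.mem_univ, true_imp_iff]
    constructor
    · rintro ⟨h1, h2⟩ i
      split_ifs <;> simp_all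
    · intro h
      have h1 := h a
      have h2 := h b
      simp_all [hab.symm]
  rw [h, Measure.pi_pi, ← Finset.prod_subset (Finset.subset_univ {a, b})]
  · rw [Finset.prod_pair hab]
    simp [hab.symm]
  · intro x _ hx
    simp only [Finset.mem_insert, Finset.mem_singleton, not_or] at hx
    simp [hx.1, hx.2]

theorem aux_three {L : ℕ} (ν : Measure (Fin 2)) [IsProbabilityMeasure ν] (a b c : Fin L)
    (hab : a ≠ b) (hac : a ≠ c) (hbc : b ≠ c) :
    Measure.pi (fun _ : Fin L => ν) {σ | σ a = 1 ∧ σ b = 0 ∧ σ c = 0}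
      = ν {1} * (ν {0} * ν {0}) := by
  have h : {σ : Fin L → Fin 2 | σ a = 1 ∧ σ b = 0 ∧ σ c = 0} = Set.univ.pi
      (fun i => if i = a then {1} else if i = b then {0} else if i = c then {0}
        else Set.univ) := by
    ext σ
    simp only [Set.mem_setOf_eq, Set.mem_pi, Set.mem_univ, true_imp_iff]
    constructor
    · rintro ⟨h1, h2, h3⟩ i
      split_ifs <;> simp_all
    · intro h
      have h1 := h a
      have h2 := h b
      have h3 := h c
      simp_all [hab.symm, hac.symm, hbc.symm]
  rw [h, Measure.pi_pi, ← Finset.prod_subset (Finset.subset_univ {a, b, c})]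
  · rw [Finset.prod_insert (by simp [hab, hac]), Finset.prod_pair hbc]
    simp [hab.symm, hac.symm, hbc.symm]
  · intro x _ hx
    simp only [Finset.mem_insert, Finset.mem_singleton, not_or] at hx
    simp [hx.1, hx.2.1, hx.2.2]

/-- **Fundamental diagram of model A**: under the Bernoulli product measure with density
`ρ` on configurations of a ring of `L ≥ 3` sites, the stationary flow
`J = p1·P(σ(k)=1, σ(k+1)=0) + 2 p2·P(σ(k)=1, σ(k+1)=0, σ(k+2)=0)` (sites taken mod `L`)
equals `ρ(1-ρ)[p1 + 2 p2 (1-ρ)]`. -/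
theorem modelA_fundamental_diagram (p1 p2 ρ : ℝ) (hp1 : 0 ≤ p1) (hp2 : 0 ≤ p2)
    (hρ : ρ ∈ Set.Icc (0 : ℝ) 1) (L : ℕ) (hL : 3 ≤ L) (k : Fin L)
    (μ : Measure (Fin L → Fin 2))
    (hμ : μ = Measure.pi (fun _ : Fin L =>
      ENNReal.ofReal ρ • Measure.dirac (1 : Fin 2)
        + ENNReal.ofReal (1 - ρ) • Measure.dirac (0 : Fin 2))) :
    p1 * (μ {σ | σ k = 1 ∧ σ ⟨((k : ℕ) + 1) % L, Nat.mod_lt _ k.pos⟩ = 0}).toReal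
      + 2 * p2 * (μ {σ | σ k = 1 ∧ σ ⟨((k : ℕ) + 1) % L, Nat.mod_lt _ k.pos⟩ = 0
          ∧ σ ⟨((k : ℕ) + 2) % L, Nat.mod_lt _ k.pos⟩ = 0}).toReal
    = ρ * (1 - ρ) * (p1 + 2 * p2 * (1 - ρ)) := by
  obtain ⟨h0, h1⟩ := hρ
  have h1' : 0 ≤ 1 - ρ := by linarith
  have hk := k.isLt
  have e1 : ((k : ℕ) + 1) % L = if (k : ℕ) + 1 < L then (k : ℕ) + 1 else (k : ℕ) + 1 - L := by
    split_ifs with h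
    · exact Nat.mod_eq_of_lt h
    · rw [Nat.mod_eq_sub_mod (by omega), Nat.mod_eq_of_lt (by omega)]
  have e2 : ((k : ℕ) + 2) % L = if (k : ℕ) + 2 < L then (k : ℕ) + 2 else (k : ℕ) + 2 - L := by
    split_ifs with h
    · exact Nat.mod_eq_of_lt h
    · rw [Nat.mod_eq_sub_mod (by omega), Nat.mod_eq_of_lt (by omega)]
  have hab : k ≠ ⟨((k : ℕ) + 1) % L, Nat.mod_lt _ k.pos⟩ := by
    rw [Ne, Fin.ext_iff]
    simp only [e1]
    split_ifs <;> omega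
  have hac : k ≠ ⟨((k : ℕ) + 2) % L, Nat.mod_lt _ k.pos⟩ := by
    rw [Ne, Fin.ext_iff]
    simp only [e2]
    split_ifs <;> omega
  have hbc : (⟨((k : ℕ) + 1) % L, Nat.mod_lt _ k.pos⟩ : Fin L)
      ≠ ⟨((k : ℕ) + 2) % L, Nat.mod_lt _ k.pos⟩ := by
    rw [Ne, Fin.ext_iff]
    simp only [e1, e2]
    split_ifs <;> omega
  have hP : IsProbabilityMeasure (ENNReal.ofReal ρ • Measure.dirac (1 : Fin 2)
        + ENNReal.ofReal (1 - ρ) • Measure.dirac (0 : Fin 2)) := by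
    constructor
    simp [← ENNReal.ofReal_add h0 h1']
  subst hμ
  rw [aux_two _ _ _ hab, aux_three _ _ _ _ hab hac hbc]
  simp [ENNReal.toReal_mul, ENNReal.toReal_ofReal h0, ENNReal.toReal_ofReal h1']
  ring
end

section
/- (Exactly solvable line of model A with open boundaries.) Let p1, p2 ≥ 0, ρ ∈ (0,1), β3 ∈ ℝ, and set E = 1−ρ, D = ρ. Define boundary rates α1 = p1·D + p2·D·E, α2 = p2·D, α3 = α1, β1 = −β3 + p1·E + p2·E·(1+E), β2 = −β3 + p1 + p2·E, β4 = p1·E + p2·E². Let h be the local transition matrix of range 3 of model A, let h_left be the local transition matrix of range 2 with nonzero rates (0,0)→(1,0) at rate α1, (0,0)→(0,1) at rate α2, (0,1)→(1,1) at rate α3, and let h_right be the local transition matrix of range 2 with nonzero rates (0,1)→(0,0) at rate β1, (1,0)→(0,1) at rate β2, (1,0)→(0,0) at rate β3, (1,1)→(1,0) at rate β4. Then for every L ≥ 4, the product function P(σ) = Π_{k=0}^{L−1} w(σ(k)), where w(1) = ρ and w(0) = 1−ρ, satisfies H_L P = 0 for the open-chain stochastic Hamiltonian H_L = h_left + Σ_k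 h_k + h_right. -/
open Finset

noncomputable section

/-- Left-boundary (input) transition rates for model A: `(0,0)→(1,0)` at rate `a1`,
`(0,0)→(0,1)` at rate `a2`, `(0,1)→(1,1)` at rate `a3`. -/
def rateLeftA (a1 a2 a3 : ℝ) : (Fin 2 → Fin 2) → (Fin 2 → Fin 2) → ℝ :=
  fun τ τ' =>
    if τ = ![0, 0] ∧ τ' = ![1, 0] then a1
    else if τ = ![0, 0] ∧ τ' = ![0, 1] then a2
    else if τ = ![0, 1] ∧ τ' = ![1, 1] then a3
    else 0

/-- Right-boundary (output) transition rates for model A: `(0,1)→(0,0)` at rate `b1`,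
`(1,0)→(0,1)` at rate `b2`, `(1,0)→(0,0)` at rate `b3`, `(1,1)→(1,0)` at rate `b4`. -/
def rateRightA (b1 b2 b3 b4 : ℝ) : (Fin 2 → Fin 2) → (Fin 2 → Fin 2) → ℝ :=
  fun τ τ' =>
    if τ = ![0, 1] ∧ τ' = ![0, 0] then b1
    else if τ = ![1, 0] ∧ τ' = ![0, 1] then b2
    else if τ = ![1, 0] ∧ τ' = ![0, 0] then b3
    else if τ = ![1, 1] ∧ τ' = ![1, 0] then b4
    else 0

lemma rateToH_sum {m k : ℕ} (w : (Fin k → Fin m) → (Fin k → Fin m) → ℝ) (a : Fin k → Fin m)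
    (f : (Fin k → Fin m) → ℝ) :
    ∑ τ, rateToH w a τ * f τ = ∑ τ, (w a τ * f a - w τ a * f τ) := by
  rw [Finset.sum_sub_distrib, ← Finset.sum_mul]
  have h1 : ∀ τ, rateToH w a τ * f τ =
      (if a = τ then ((∑ c, w a c) * f a) else 0) - w τ a * f τ := by
    intro τ
    unfold rateToH
    split_ifs with h
    · subst h
      have : ∑ c, w a c = w a a + ∑ c ∈ Finset.univ.filter (fun c => c ≠ a), w a c := by
        rw [Finset.filter_ne', Finset.add_sum_erase _ _ (Finset.mem_univ a)]
      rw [this]; ring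
    · ring
  rw [Finset.sum_congr rfl (fun τ _ => h1 τ), Finset.sum_sub_distrib]
  simp

/-- single-site weight -/
def wt (ρ : ℝ) (s : Fin 2) : ℝ := if s = 1 then ρ else 1 - ρ

lemma prod_update_s7 (ρ : ℝ) (hρ : ρ ∈ Set.Ioo (0 : ℝ) 1) (L r k : ℕ) (hL : 0 < L) (hk : k + r ≤ L)
    (σ : Fin L → Fin 2) (τ : Fin r → Fin 2) :
    ∏ i, wt ρ (updateConfig L 2 r σ k τ i) =
      (∏ i, wt ρ (σ i)) *
        ∏ j : Fin r, (wt ρ (τ j) / wt ρ (σ ⟨(k + (j : ℕ)) % L, Nat.mod_lt _ hL⟩)) := by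
  have hw : ∀ s, wt ρ s ≠ 0 := by
    intro s
    unfold wt
    have := hρ.1
    have := hρ.2
    split_ifs <;> linarith
  have hmod : ∀ j : Fin r, (k + (j : ℕ)) % L = k + j := fun j => Nat.mod_eq_of_lt (by omega)
  have := Fintype.prod_of_injective
    (fun j : Fin r => (⟨(k + (j : ℕ)) % L, Nat.mod_lt _ hL⟩ : Fin L))
    (by
      intro a b hab
      simp only [Fin.mk.injEq, hmod] at hab
      ext; omega)
    (fun j : Fin r => (wt ρ (τ j) / wt ρ (σ ⟨(k + (j : ℕ)) % L, Nat.mod_lt _ hL⟩)))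
    (fun i => wt ρ (updateConfig L 2 r σ k τ i) / wt ρ (σ i))
    (by
      intro i hi
      have : ¬ ∃ j : Fin r, (i : ℕ) = (k + (j : ℕ)) % L := by
        rintro ⟨j, hj⟩
        exact hi ⟨j, Fin.ext hj.symm⟩
      simp only [updateConfig, dif_neg this]
      exact div_self (hw _))
    (by
      intro j
      have h : ∃ j' : Fin r, (((⟨(k + (j : ℕ)) % L, Nat.mod_lt _ hL⟩ : Fin L)) : ℕ)
          = (k + (j' : ℕ)) % L := ⟨j, rfl⟩
      have hc : h.choose = j := by
        have h2 : (k + (j : ℕ)) % L = (k + (h.choose : ℕ)) % L := h.choose_spec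
        have h3 := (hmod j).symm.trans (h2.trans (hmod h.choose))
        exact Fin.ext (Nat.add_left_cancel h3).symm
      simp only [updateConfig, dif_pos h, hc])
  rw [this, ← Finset.prod_mul_distrib]
  refine Finset.prod_congr rfl fun i _ => ?_
  field_simp [hw]

lemma univ2 : (Finset.univ : Finset (Fin 2 → Fin 2)) = {![0,0], ![0,1], ![1,0], ![1,1]} := by
  decide

lemma univ3 : (Finset.univ : Finset (Fin 3 → Fin 2)) =
    {![0,0,0], ![0,0,1], ![0,1,0], ![0,1,1], ![1,0,0], ![1,0,1], ![1,1,0], ![1,1,1]} := by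
  decide

/-- numerical value of a state -/
def nv (s : Fin 2) : ℝ := if s = 1 then 1 else 0

def G (p1 p2 : ℝ) (a b : Fin 2) : ℝ := p1 * nv a + p2 * (nv a + nv b - nv a * nv b)

lemma bulk_local (p1 p2 ρ : ℝ) (h0 : ρ ≠ 0) (h1 : 1 - ρ ≠ 0) (a : Fin 3 → Fin 2) :
    ∑ τ, hA p1 p2 a τ * ∏ j, (wt ρ (τ j) / wt ρ (a j)) = G p1 p2 (a 0) (a 1) - G p1 p2 (a 1) (a 2) := by
  unfold hA
  rw [rateToH_sum, univ3]
  have ha : a ∈ (Finset.univ : Finset (Fin 3 → Fin 2)) := Finset.mem_univ a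
  rw [univ3] at ha
  simp only [Finset.mem_insert, Finset.mem_singleton] at ha
  rcases ha with rfl | rfl | rfl | rfl | rfl | rfl | rfl | rfl <;>
  · simp [rateA, G, nv, wt, Fin.prod_univ_succ]
    try field_simp
    try ring

lemma left_local (p1 p2 ρ : ℝ) (h0 : ρ ≠ 0) (h1 : 1 - ρ ≠ 0) (a : Fin 2 → Fin 2) :
    ∑ τ, rateToH (rateLeftA (p1 * ρ + p2 * ρ * (1 - ρ)) (p2 * ρ) (p1 * ρ + p2 * ρ * (1 - ρ))) a τ *
        ∏ j, (wt ρ (τ j) / wt ρ (a j)) =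
      (p1 * ρ + p2 * ρ * (2 - ρ)) - G p1 p2 (a 0) (a 1) := by
  rw [rateToH_sum, univ2]
  have ha : a ∈ (Finset.univ : Finset (Fin 2 → Fin 2)) := Finset.mem_univ a
  rw [univ2] at ha
  simp only [Finset.mem_insert, Finset.mem_singleton] at ha
  rcases ha with rfl | rfl | rfl | rfl <;>
  · simp [rateLeftA, G, nv, wt, Fin.prod_univ_succ]
    try field_simp
    try ring

lemma right_local (p1 p2 ρ β3 : ℝ) (h0 : ρ ≠ 0) (h1 : 1 - ρ ≠ 0) (a : Fin 2 → Fin 2) :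
    ∑ τ, rateToH (rateRightA (-β3 + p1 * (1 - ρ) + p2 * (1 - ρ) * (1 + (1 - ρ)))
          (-β3 + p1 + p2 * (1 - ρ)) β3 (p1 * (1 - ρ) + p2 * (1 - ρ) ^ 2)) a τ *
        ∏ j, (wt ρ (τ j) / wt ρ (a j)) =
      G p1 p2 (a 0) (a 1) - (p1 * ρ + p2 * ρ * (2 - ρ)) := by
  rw [rateToH_sum, univ2]
  have ha : a ∈ (Finset.univ : Finset (Fin 2 → Fin 2)) := Finset.mem_univ a
  rw [univ2] at ha
  simp only [Finset.mem_insert, Finset.mem_singleton] at ha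
  rcases ha with rfl | rfl | rfl | rfl <;>
  · simp [rateRightA, G, nv, wt, Fin.prod_univ_succ]
    try field_simp
    try ring

/-- **Exactly solvable line of model A with open boundaries**: with the boundary rates
`α1 = p1 D + p2 D E`, `α2 = p2 D`, `α3 = α1`, `β1 = -β3 + p1 E + p2 E(1+E)`,
`β2 = -β3 + p1 + p2 E`, `β4 = p1 E + p2 E²` (where `D = ρ`, `E = 1-ρ`), the Bernoulli
product measure with density `ρ` is a zero-energy eigenvector of the open-chain
stochastic Hamiltonian of model A for every `L ≥ 4`. -/
theorem modelA_open_product_measure (p1 p2 ρ β3 : ℝ) (hp1 : 0 ≤ p1) (hp2 : 0 ≤ p2)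
    (hρ : ρ ∈ Set.Ioo (0 : ℝ) 1)
    (E D α1 α2 α3 β1 β2 β4 : ℝ)
    (hE : E = 1 - ρ) (hD : D = ρ)
    (ha1 : α1 = p1 * D + p2 * D * E)
    (ha2 : α2 = p2 * D)
    (ha3 : α3 = α1)
    (hb1 : β1 = -β3 + p1 * E + p2 * E * (1 + E))
    (hb2 : β2 = -β3 + p1 + p2 * E)
    (hb4 : β4 = p1 * E + p2 * E ^ 2)
    (L : ℕ) (hL : 4 ≤ L) :
    Hopen L 2 3 (by omega) (hA p1 p2)
      (rateToH (rateLeftA α1 α2 α3)) (rateToH (rateRightA β1 β2 β3 β4))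
      (fun σ => ∏ k : Fin L, (if σ k = 1 then ρ else 1 - ρ)) = 0 := by
  have h0 : ρ ≠ 0 := ne_of_gt hρ.1
  have h1 : 1 - ρ ≠ 0 := by have := hρ.2; intro h; linarith
  subst ha3 ha2 hb1 hb2 hb4 ha1 hE hD
  funext σ
  have hpos : 0 < L := by omega
  change (∑ τ : Fin 2 → Fin 2, rateToH _ (fun j => σ ⟨(j : ℕ) % L, _⟩) τ *
        (∏ i, wt _ (updateConfig L 2 2 σ 0 τ i)))
    + (∑ k ∈ Finset.range (L - 3 + 1), ∑ τ : Fin 3 → Fin 2,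
      hA p1 p2 (fun j => σ ⟨(k + (j : ℕ)) % L, _⟩) τ *
        (∏ i, wt _ (updateConfig L 2 3 σ k τ i)))
    + (∑ τ : Fin 2 → Fin 2,
      rateToH _ (fun j => σ ⟨((L - 2) + (j : ℕ)) % L, _⟩) τ *
        (∏ i, wt _ (updateConfig L 2 2 σ (L - 2) τ i))) = 0
  set P := ∏ i, wt D (σ i) with hP
  let s : ℕ → Fin 2 := fun n => σ ⟨n % L, Nat.mod_lt _ hpos⟩
  have hbulk : ∀ k ∈ Finset.range (L - 3 + 1), (∑ τ : Fin 3 → Fin 2,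
      hA p1 p2 (fun j => σ ⟨(k + (j : ℕ)) % L, Nat.mod_lt _ hpos⟩) τ *
        (∏ i, wt D (updateConfig L 2 3 σ k τ i))) =
      P * (G p1 p2 (s k) (s (k+1)) - G p1 p2 (s (k+1)) (s (k+1+1))) := by
    intro k hk
    have hk' : k + 3 ≤ L := by have := Finset.mem_range.1 hk; omega
    have := bulk_local p1 p2 D h0 h1 (fun j => s (k + j))
    refine Eq.trans ?_ (congrArg (P * ·) this)
    simp only [Finset.mul_sum]
    refine Finset.sum_congr rfl fun τ _ => ?_
    rw [prod_update_s7 D hρ L 3 k hpos hk' σ τ]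
    exact mul_left_comm _ _ _
  rw [Finset.sum_congr rfl hbulk, ← Finset.mul_sum,
    Finset.sum_range_sub' (fun k => G p1 p2 (s k) (s (k+1)))]
  have hleft : (∑ τ : Fin 2 → Fin 2, rateToH (rateLeftA (p1 * D + p2 * D * (1 - D)) (p2 * D)
      (p1 * D + p2 * D * (1 - D))) (fun j => σ ⟨(j : ℕ) % L, Nat.mod_lt _ hpos⟩) τ *
        (∏ i, wt D (updateConfig L 2 2 σ 0 τ i))) =
      P * ((p1 * D + p2 * D * (2 - D)) - G p1 p2 (s 0) (s 1)) := by
    have := left_local p1 p2 D h0 h1 (fun j => s j)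
    refine Eq.trans ?_ (congrArg (P * ·) this)
    simp only [Finset.mul_sum]
    refine Finset.sum_congr rfl fun τ _ => ?_
    rw [prod_update_s7 D hρ L 2 0 hpos (by omega) σ τ]
    simp only [Nat.zero_add]
    exact mul_left_comm _ _ _
  have hright : (∑ τ : Fin 2 → Fin 2,
      rateToH (rateRightA (-β3 + p1 * (1 - D) + p2 * (1 - D) * (1 + (1 - D)))
          (-β3 + p1 + p2 * (1 - D)) β3 (p1 * (1 - D) + p2 * (1 - D) ^ 2))
        (fun j => σ ⟨((L - 2) + (j : ℕ)) % L, Nat.mod_lt _ hpos⟩) τ *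
        (∏ i, wt D (updateConfig L 2 2 σ (L - 2) τ i))) =
      P * (G p1 p2 (s (L - 2)) (s (L - 2 + 1)) - (p1 * D + p2 * D * (2 - D))) := by
    have := right_local p1 p2 D β3 h0 h1 (fun j => s (L - 2 + j))
    refine Eq.trans ?_ (congrArg (P * ·) this)
    simp only [Finset.mul_sum]
    refine Finset.sum_congr rfl fun τ _ => ?_
    rw [prod_update_s7 D hρ L 2 (L - 2) hpos (by omega) σ τ]
    exact mul_left_comm _ _ _
  rw [hleft, hright, show L - 3 + 1 = L - 2 by omega]
  simp only [Nat.zero_add]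
  ring
end
end

section
/- (Sufficient relations for a representation of the bulk algebra of model B.) Let A be an associative ℝ-algebra, E, D ∈ A, and e, d, λ, x real numbers with d ≠ 0. Suppose E² = e·E, D² = d·D, and λ·D·E·D = e·d·D. Define X11 = (e/d)·(d+x)·E, X12 = e·D + (x/d)·E·D, X21 = (x/d)·D·E, X22 = x·D. Then the eight bulk relations of model B hold: X11·E = E·X11; D·E·E = X12·E − E·X21; −D·E·E = X21·E − D·X11; X22·E = D·X21; X11·D = E·X12; λ·D·E·D = X12·D − E·X22; −λ·D·E·D = X21·D − D·X12; and X22·D = D·X22. -/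
/-- **Sufficient relations for a representation of the bulk algebra of model B**: in any
associative ℝ-algebra, if `E² = e·E`, `D² = d·D` and `λ·D·E·D = e·d·D`, then with
`X11 = (e/d)(d+x)·E`, `X12 = e·D + (x/d)·E·D`, `X21 = (x/d)·D·E`, `X22 = x·D`,
the eight bulk cancelling-mechanism relations of model B hold. -/
theorem modelB_bulk_algebra_rep {A : Type*} [Ring A] [Algebra ℝ A]
    (E D : A) (e d lam x : ℝ) (hd : d ≠ 0)
    (hE : E * E = e • E) (hD : D * D = d • D)
    (hDED : lam • (D * E * D) = (e * d) • D)
    (X11 X12 X21 X22 : A)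
    (h11 : X11 = (e / d * (d + x)) • E)
    (h12 : X12 = e • D + (x / d) • (E * D))
    (h21 : X21 = (x / d) • (D * E))
    (h22 : X22 = x • D) :
    (X11 * E = E * X11)
    ∧ (D * E * E = X12 * E - E * X21)
    ∧ (-(D * E * E) = X21 * E - D * X11)
    ∧ (X22 * E = D * X21)
    ∧ (X11 * D = E * X12)
    ∧ (lam • (D * E * D) = X12 * D - E * X22)
    ∧ (-(lam • (D * E * D)) = X21 * D - D * X12)
    ∧ (X22 * D = D * X22) := by
  have hDEE : D * E * E = e • (D * E) := by rw [mul_assoc, hE, mul_smul_comm]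
  have hDDE : D * (D * E) = d • (D * E) := by rw [← mul_assoc, hD, smul_mul_assoc]
  have hEED : E * (E * D) = e • (E * D) := by rw [← mul_assoc, hE, smul_mul_assoc]
  have hEDD : E * D * D = d • (E * D) := by rw [mul_assoc, hD, mul_smul_comm]
  subst h11 h12 h21 h22
  refine ⟨?_, ?_, ?_, ?_, ?_, ?_, ?_, ?_⟩
  · simp only [smul_mul_assoc, mul_smul_comm]
  · simp only [add_mul, smul_mul_assoc, mul_smul_comm, hDEE, mul_assoc, add_sub_cancel_right]
  · simp only [smul_mul_assoc, mul_smul_comm, hDEE]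
    match_scalars
    field_simp
    ring
  · simp only [smul_mul_assoc, mul_smul_comm, hDDE]
    match_scalars
    field_simp
  · simp only [mul_add, smul_mul_assoc, mul_smul_comm, hEED]
    match_scalars
    field_simp
  · rw [hDED]
    simp only [add_mul, smul_mul_assoc, mul_smul_comm, hEDD, hD]
    match_scalars <;> field_simp <;> ring
  · rw [hDED]
    simp only [mul_add, smul_mul_assoc, mul_smul_comm, hD, ← mul_assoc]
    match_scalars <;> ring
  · simp only [smul_mul_assoc, mul_smul_comm]
end

section
/- (Stationary state of model B with periodic boundary conditions as a 2-dimensional matrix-product state.) Let λ, e, d be real numbers with λ ≠ 1 and e·d = λ/(1−λ). Let M_0 = E = [[e,1],[0,0]] and M_1 = D = [[d,0],[1,0]] (2×2 real matrices). Let h be the local transition matrix of range 3 on 2 states of model B and H^(p)_L the corresponding periodic stochastic Hamiltonian. Then for every L ≥ 3, the function P on configurations defined by P(σ) = Trace(M_{σ(0)} M_{σ(1)} ⋯ M_{σ(L−1)}) satisfies H^(p)_L P = 0; i.e. this matrix-product state is a stationary state of model B on the ring of L sites. -/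
open Finset

noncomputable section

/-- The bulk transition rates of **model B**: `(1,0,0)→(0,1,0)` at rate `1` and
`(1,0,1)→(0,1,1)` at rate `lam` (state `1` = particle, state `0` = empty). -/
def rateB (lam : ℝ) : (Fin 3 → Fin 2) → (Fin 3 → Fin 2) → ℝ :=
  fun τ τ' =>
    if τ = ![1, 0, 0] ∧ τ' = ![0, 1, 0] then 1
    else if τ = ![1, 0, 1] ∧ τ' = ![0, 1, 1] then lam
    else 0

/-- The local transition matrix of range 3 of model B. -/
def hB (lam : ℝ) : (Fin 3 → Fin 2) → (Fin 3 → Fin 2) → ℝ := rateToH (rateB lam)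

def Wp (M : Fin 2 → Matrix (Fin 2) (Fin 2) ℝ) (t : ℕ → Fin 2) (a n : ℕ) :
    Matrix (Fin 2) (Fin 2) ℝ := (List.ofFn fun j : Fin n => M (t (a + j))).prod

lemma Wp_succ (M : Fin 2 → Matrix (Fin 2) (Fin 2) ℝ) (t : ℕ → Fin 2) (a n : ℕ) :
    Wp M t a (n + 1) = M (t a) * Wp M t (a + 1) n := by
  simp [Wp, List.ofFn_succ, add_assoc, add_comm 1]

lemma Wp_succ' (M : Fin 2 → Matrix (Fin 2) (Fin 2) ℝ) (t : ℕ → Fin 2) (a n : ℕ) :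
    Wp M t a (n + 1) = Wp M t a n * M (t (a + n)) := by
  rw [Wp, List.ofFn_succ', List.concat_eq_append, List.prod_append]
  simp [Wp]

lemma Wp_shift (M : Fin 2 → Matrix (Fin 2) (Fin 2) ℝ) (t : ℕ → Fin 2) (n : ℕ)
    (ht : ∀ i, t (i + (n + 1)) = t i) (a : ℕ) :
    (Wp M t a (n + 1)).trace = (Wp M t 0 (n + 1)).trace := by
  induction a with
  | zero => rfl
  | succ a ih =>
    rw [← ih, Wp_succ', Wp_succ, Matrix.trace_mul_comm]
    rw [show a + 1 + n = a + (n + 1) by ring, ht]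

lemma sum3 (g : (Fin 3 → Fin 2) → ℝ) : ∑ τ, g τ =
    g ![0,0,0] + g ![0,0,1] + g ![0,1,0] + g ![0,1,1] +
    g ![1,0,0] + g ![1,0,1] + g ![1,1,0] + g ![1,1,1] := by
  have : (Finset.univ : Finset (Fin 3 → Fin 2)) =
    {![0,0,0], ![0,0,1], ![0,1,0], ![0,1,1], ![1,0,0], ![1,0,1], ![1,1,0], ![1,1,1]} := by
    decide
  rw [this]
  repeat rw [Finset.sum_insert (by decide)]
  rw [Finset.sum_singleton]
  ring

/-- telescoping matrices -/
def FB (e d : ℝ) (a b : Fin 2) : Matrix (Fin 2) (Fin 2) ℝ :=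
  if a = 0 then (if b = 0 then 0 else !![1, 0; -e, 0])
  else (if b = 0 then !![d * e, d; e, 1] else !![d * d, 0; d, 0])

lemma local_id_s11 (lam e d : ℝ) (hlam : lam ≠ 1)
    (hed : e * d = lam / (1 - lam))
    (M : Fin 2 → Matrix (Fin 2) (Fin 2) ℝ)
    (hM0 : M 0 = !![e, 1; 0, 0]) (hM1 : M 1 = !![d, 0; 1, 0])
    (R : Matrix (Fin 2) (Fin 2) ℝ) (a b c : Fin 2) :
    ∑ τ, hB lam ![a, b, c] τ * (M (τ 0) * (M (τ 1) * (M (τ 2) * R))).trace =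
      (FB e d a b * M c * R).trace - (M a * FB e d b c * R).trace := by
  have h1 : lam * (1 + e * d) = e * d := by
    have : 1 - lam ≠ 0 := sub_ne_zero.mpr hlam.symm
    rw [hed]; field_simp; ring
  rw [sum3]
  fin_cases a <;> fin_cases b <;> fin_cases c <;>
    simp [hB, rateToH, rateB, FB, hM0, hM1, Matrix.trace_fin_two,
      Matrix.vecMul, dotProduct] <;>
    first
    | ring1
    | linear_combination (d * R 0 0 + R 0 1) * h1
    | linear_combination (-(d * R 0 0 + R 0 1)) * h1

lemma upd_mem (n : ℕ) (σ : Fin (n + 3) → Fin 2) (k : ℕ) (τ : Fin 3 → Fin 2) (j : Fin 3)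
    (i : Fin (n + 3)) (hi : (i : ℕ) = (k + j) % (n + 3)) :
    updateConfig (n + 3) 2 3 σ k τ i = τ j := by
  have h : ∃ j : Fin 3, (i : ℕ) = (k + (j : ℕ)) % (n + 3) := ⟨j, hi⟩
  rw [updateConfig, dif_pos h]
  congr 1
  have h2 := h.choose_spec
  have h3 : (j : ℕ) ≡ (h.choose : ℕ) [MOD (n + 3)] := Nat.ModEq.add_left_cancel' k (hi.symm.trans h2)
  have := Nat.ModEq.eq_of_lt_of_lt h3 (by omega) (by omega)
  exact (Fin.ext this).symm

lemma upd_not_mem (n : ℕ) (σ : Fin (n + 3) → Fin 2) (k : ℕ) (τ : Fin 3 → Fin 2) (j : ℕ)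
    (hj : j < n) (i : Fin (n + 3)) (hi : (i : ℕ) = (k + 3 + j) % (n + 3)) :
    updateConfig (n + 3) 2 3 σ k τ i = σ i := by
  rw [updateConfig, dif_neg]
  rintro ⟨l, hl⟩
  rw [hi, add_assoc] at hl
  have h3 : (3 + j) ≡ (l : ℕ) [MOD (n + 3)] := Nat.ModEq.add_left_cancel' k hl
  have := Nat.ModEq.eq_of_lt_of_lt h3 (by omega) (by omega)
  omega

/-- periodic extension -/
def ext' (n : ℕ) (σ : Fin (n + 3) → Fin 2) (i : ℕ) : Fin 2 :=
  σ ⟨i % (n + 3), Nat.mod_lt _ (by omega)⟩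

lemma ext'_per (n : ℕ) (σ : Fin (n + 3) → Fin 2) (i : ℕ) :
    ext' n σ (i + (n + 3)) = ext' n σ i := by
  simp [ext']

lemma trace_eq (M : Fin 2 → Matrix (Fin 2) (Fin 2) ℝ) (n : ℕ) (σ : Fin (n + 3) → Fin 2) (k : ℕ) :
    ((List.ofFn fun j : Fin (n + 3) => M (σ j)).prod).trace =
      (Wp M (ext' n σ) k (n + 3)).trace := by
  rw [Wp_shift M (ext' n σ) (n + 2) (ext'_per n σ) k]
  congr 3
  funext j
  simp [ext', Nat.mod_eq_of_lt j.2]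

lemma trace_upd (M : Fin 2 → Matrix (Fin 2) (Fin 2) ℝ) (n : ℕ) (σ : Fin (n + 3) → Fin 2) (k : ℕ)
    (τ : Fin 3 → Fin 2) :
    ((List.ofFn fun j : Fin (n + 3) => M (updateConfig (n + 3) 2 3 σ k τ j)).prod).trace =
      (M (τ 0) * (M (τ 1) * (M (τ 2) * Wp M (ext' n σ) (k + 3) n))).trace := by
  rw [trace_eq M n _ k, Wp_succ, Wp_succ, Wp_succ]
  have h0 : ext' n (updateConfig (n + 3) 2 3 σ k τ) k = τ 0 := upd_mem n σ k τ 0 _ rfl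
  have h1 : ext' n (updateConfig (n + 3) 2 3 σ k τ) (k + 1) = τ 1 := upd_mem n σ k τ 1 _ rfl
  have h2 : ext' n (updateConfig (n + 3) 2 3 σ k τ) (k + 1 + 1) = τ 2 := upd_mem n σ k τ 2 _ rfl
  have h3 : Wp M (ext' n (updateConfig (n + 3) 2 3 σ k τ)) (k + 1 + 1 + 1) n =
      Wp M (ext' n σ) (k + 3) n := by
    unfold Wp
    congr 2
    funext j
    congr 1
    exact upd_not_mem n σ k τ j j.2 _ rfl
  rw [h0, h1, h2, h3]

/-- **Stationary state of model B with periodic boundary conditions as a 2-dimensional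
matrix-product state**: with `M 0 = E = [[e,1],[0,0]]`, `M 1 = D = [[d,0],[1,0]]` and
`e·d = λ/(1-λ)`, the state `P(σ) = Trace (M_{σ 0} ⋯ M_{σ (L-1)})` is a zero-energy
eigenvector of the periodic stochastic Hamiltonian of model B for every `L ≥ 3`. -/
theorem modelB_periodic_MPS (lam e d : ℝ) (hlam : lam ≠ 1)
    (hed : e * d = lam / (1 - lam))
    (M : Fin 2 → Matrix (Fin 2) (Fin 2) ℝ)
    (hM0 : M 0 = !![e, 1; 0, 0]) (hM1 : M 1 = !![d, 0; 1, 0])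
    (L : ℕ) (hL : 3 ≤ L) :
    Hper L 2 3 (hB lam)
      (fun σ => ((List.ofFn fun j : Fin L => M (σ j)).prod).trace) = 0 := by
  obtain ⟨n, rfl⟩ : ∃ n, L = n + 3 := ⟨L - 3, by omega⟩
  funext σ
  set s := ext' n σ with hs
  let G : ℕ → ℝ := fun k => (FB e d (s k) (s (k + 1)) * Wp M s (k + 2) (n + 1)).trace
  have key : ∀ k : Fin (n + 3), ∑ τ : Fin 3 → Fin 2,
      hB lam (fun j => σ ⟨((k : ℕ) + (j : ℕ)) % (n + 3), Nat.mod_lt _ k.pos⟩) τ *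
      ((List.ofFn fun j : Fin (n + 3) => M (updateConfig (n + 3) 2 3 σ k τ j)).prod).trace
      = G k - G (k + 1) := by
    intro k
    have ha : (fun j : Fin 3 => σ ⟨((k : ℕ) + (j : ℕ)) % (n + 3), Nat.mod_lt _ k.pos⟩)
        = ![s k, s (k + 1), s (k + 2)] := by
      funext j
      fin_cases j <;> rfl
    rw [ha]
    simp only [trace_upd]
    rw [local_id_s11 lam e d hlam hed M hM0 hM1]
    simp only [G]
    congr 1
    · rw [Wp_succ, mul_assoc]
    · rw [Wp_succ', show (k : ℕ) + 1 + 2 + n = k + (n + 3) by ring, hs, ext'_per, mul_assoc,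
        Matrix.trace_mul_comm, mul_assoc]
  simp only [Hper, Pi.zero_apply]
  rw [Finset.sum_congr rfl (fun k _ => key k),
    Fin.sum_univ_eq_sum_range (fun k => G k - G (k + 1)), Finset.sum_range_sub']
  have h0 : s (0 + (n + 3)) = s 0 := ext'_per n σ 0
  have h1 : s (0 + (n + 3) + 1) = s (0 + 1) := by
    rw [add_right_comm]; exact ext'_per n σ 1
  have h2 : Wp M s (n + 3 + 2) (n + 1) = Wp M s (0 + 2) (n + 1) := by
    unfold Wp
    congr 2
    funext j
    rw [show n + 3 + 2 + (j : ℕ) = 0 + 2 + j + (n + 3) by ring, hs, ext'_per]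
  rw [zero_add] at h0 h1
  simp only [G]
  rw [h0, h1, h2, sub_self]
end
end

section
/- (Fundamental diagram of model B.) Let λ ∈ (0,1) and e, d > 0 with e·d = λ/(1−λ), and let E = [[e,1],[0,0]], D = [[d,0],[1,0]] (2×2 real matrices), C = E + D. Then the limits ρ = lim_{L→∞} Trace(D·C^{L−1}) / Trace(C^L) and J = lim_{L→∞} [Trace(D·E·E·C^{L−3}) + λ·Trace(D·E·D·C^{L−3})] / Trace(C^L) exist, ρ ∈ (0,1), and they satisfy J = ρ·[1 − (1 − √(1 − 4(1−λ)·ρ·(1−ρ))) / (2(1−λ)(1−ρ))]. -/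
open Filter Matrix

lemma pow_C_aux (s m : ℝ) (hm : 0 < m) (h : m ^ 2 = s * m + 1) (n : ℕ) :
    (!![s, 1; 1, 0] : Matrix (Fin 2) (Fin 2) ℝ) ^ n
      = (m ^ n / (m ^ 2 + 1)) • !![m ^ 2, m; m, 1]
        + ((-1 / m) ^ n / (m ^ 2 + 1)) • !![1, -m; -m, m ^ 2] := by
  have hs : s = m - 1 / m := by field_simp; linarith
  have h1 : m ^ 2 + 1 ≠ 0 := by positivity
  induction n with
  | zero =>
    ext i j
    fin_cases i <;> fin_cases j <;> simp <;> field_simp <;> ring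
  | succ k ih =>
    rw [pow_succ, ih, hs, pow_succ m k, pow_succ (-1 / m) k]
    generalize (-1 / m) ^ k = q
    generalize m ^ k = p
    ext i j
    fin_cases i <;> fin_cases j <;> simp [Matrix.mul_apply, Fin.sum_univ_two] <;>
      field_simp <;> ring

lemma lim_aux (s m : ℝ) (hm : 1 < m) (h : m ^ 2 = s * m + 1) (k : ℕ)
    (X : Matrix (Fin 2) (Fin 2) ℝ) :
    Tendsto (fun L : ℕ => (X * (!![s, 1; 1, 0] : Matrix (Fin 2) (Fin 2) ℝ) ^ (L - k)).trace
        / ((!![s, 1; 1, 0] : Matrix (Fin 2) (Fin 2) ℝ) ^ L).trace) atTop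
      (nhds ((X 0 0 * m ^ 2 + X 0 1 * m + X 1 0 * m + X 1 1) / (m ^ 2 + 1) / m ^ k)) := by
  have hm0 : 0 < m := by linarith
  have h1 : m ^ 2 + 1 ≠ 0 := by positivity
  rw [← tendsto_add_atTop_iff_nat k]
  have hr : Tendsto (fun n : ℕ => ((-1 / m) / m) ^ n) atTop (nhds 0) := by
    apply tendsto_pow_atTop_nhds_zero_of_abs_lt_one
    rw [abs_div, abs_div, abs_neg, abs_one, abs_of_pos hm0, div_div, div_lt_one (by positivity)]
    nlinarith
  set a := (X 0 0 * m ^ 2 + X 0 1 * m + X 1 0 * m + X 1 1) / (m ^ 2 + 1) with ha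
  set b := (X 0 0 - X 0 1 * m - X 1 0 * m + X 1 1 * m ^ 2) / (m ^ 2 + 1) with hb
  have key : Tendsto (fun n : ℕ => (a + b * ((-1 / m) / m) ^ n)
      / (m ^ k + (-1 / m) ^ k * ((-1 / m) / m) ^ n)) atTop
      (nhds ((a + b * 0) / (m ^ k + (-1 / m) ^ k * 0))) := by
    apply Tendsto.div
    · exact tendsto_const_nhds.add (hr.const_mul b)
    · exact tendsto_const_nhds.add (hr.const_mul _)
    · simp; intro h; linarith
  simp only [mul_zero, add_zero] at key
  refine key.congr fun n => ?_
  have e1 : (X * (!![s, 1; 1, 0] : Matrix (Fin 2) (Fin 2) ℝ) ^ (n + k - k)).trace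
      = m ^ n * (a + b * ((-1 / m) / m) ^ n) := by
    rw [Nat.add_sub_cancel, pow_C_aux s m hm0 h, ha, hb, div_pow (-1 / m) m]
    have : m ^ n ≠ 0 := by positivity
    generalize (-1 / m) ^ n = q
    generalize m ^ n = p at *
    simp [Matrix.trace, Matrix.mul_apply, Fin.sum_univ_two]
    field_simp
    ring
  have e2 : ((!![s, 1; 1, 0] : Matrix (Fin 2) (Fin 2) ℝ) ^ (n + k)).trace
      = m ^ n * (m ^ k + (-1 / m) ^ k * ((-1 / m) / m) ^ n) := by
    rw [pow_C_aux s m hm0 h, div_pow (-1 / m) m, pow_add, pow_add]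
    have : m ^ n ≠ 0 := by positivity
    generalize (-1 / m) ^ n = q
    generalize (-1 / m) ^ k = q'
    generalize m ^ n = p at *
    generalize m ^ k = p' at *
    simp [Matrix.trace, Fin.sum_univ_two]
    field_simp
    ring
  rw [e1, e2, mul_div_mul_left _ _ (by positivity)]

/-- **Fundamental diagram of model B**: with the two-dimensional matrix-product matrices
`E = [[e,1],[0,0]]`, `D = [[d,0],[1,0]]` (`e·d = λ/(1-λ)`) and `C = E + D`, the
thermodynamic-limit density `ρ = lim Trace(D C^{L-1})/Trace(C^L)` and flow
`J = lim [Trace(D E E C^{L-3}) + λ Trace(D E D C^{L-3})]/Trace(C^L)` exist,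
`ρ ∈ (0,1)`, and `J = ρ[1 - (1 - √(1 - 4(1-λ)ρ(1-ρ)))/(2(1-λ)(1-ρ))]`. -/
theorem modelB_fundamental_diagram (lam e d : ℝ) (hlam : lam ∈ Set.Ioo (0 : ℝ) 1)
    (he : 0 < e) (hd : 0 < d) (hed : e * d = lam / (1 - lam))
    (E D C : Matrix (Fin 2) (Fin 2) ℝ)
    (hE : E = !![e, 1; 0, 0]) (hD : D = !![d, 0; 1, 0]) (hC : C = E + D) :
    ∃ ρ J : ℝ,
      Tendsto (fun L : ℕ => (D * C ^ (L - 1)).trace / (C ^ L).trace)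
        atTop (nhds ρ)
      ∧ Tendsto (fun L : ℕ =>
          ((D * E * E * C ^ (L - 3)).trace + lam * (D * E * D * C ^ (L - 3)).trace)
            / (C ^ L).trace)
        atTop (nhds J)
      ∧ ρ ∈ Set.Ioo (0 : ℝ) 1
      ∧ J = ρ * (1 - (1 - Real.sqrt (1 - 4 * (1 - lam) * ρ * (1 - ρ)))
          / (2 * (1 - lam) * (1 - ρ))) := by
  obtain ⟨hl0, hl1⟩ := hlam
  obtain ⟨m, hm, h⟩ : ∃ m : ℝ, 1 < m ∧ m ^ 2 = (e + d) * m + 1 := by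
    have hq := Real.sq_sqrt (show (0 : ℝ) ≤ (e + d) ^ 2 + 4 by positivity)
    have hq2 : 2 < Real.sqrt ((e + d) ^ 2 + 4) :=
      Real.lt_sqrt_of_sq_lt (by nlinarith [sq_pos_of_pos (add_pos he hd)])
    exact ⟨((e + d) + Real.sqrt ((e + d) ^ 2 + 4)) / 2, by linarith, by nlinarith⟩
  have hm0 : 0 < m := by linarith
  have h1 : m ^ 2 + 1 ≠ 0 := by positivity
  have hC' : C = !![e + d, 1; 1, 0] := by
    rw [hC, hE, hD]; ext i j; fin_cases i <;> fin_cases j <;> simp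
  have hl : lam = e * d / (1 + e * d) := by
    have : 1 - lam ≠ 0 := by linarith
    have : 1 + e * d ≠ 0 := by positivity
    field_simp at hed ⊢
    linarith
  have hl2 : 1 - lam = 1 / (1 + e * d) := by
    have : 1 + e * d ≠ 0 := by positivity
    rw [hl]; field_simp; ring
  have hk : (d * m + 1) * (e * m + 1) = m ^ 2 * (1 + e * d) := by linarith
  have hrho : 1 - (d * m + 1) / (m ^ 2 + 1) = (e * m + 1) / (m ^ 2 + 1) := by
    field_simp; linarith
  refine ⟨(d * m + 1) / (m ^ 2 + 1), (d * m + 1) / (m ^ 2 + 1) * (e / m), ?_, ?_, ⟨?_, ?_⟩, ?_⟩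
  · rw [hC']
    convert lim_aux (e + d) m hm h 1 D using 2
    simp [hD]
    field_simp
  · have t := lim_aux (e + d) m hm h 3 (D * E * E + lam • (D * E * D))
    rw [hC']
    simp only [add_mul, Matrix.trace_add, Matrix.smul_mul, Matrix.trace_smul, smul_eq_mul] at t
    convert t using 2
    have hle : lam * (1 + e * d) = e * d := by
      rw [hl]; field_simp
    simp [hD, hE, Matrix.mul_apply, Fin.sum_univ_two]
    field_simp
    have : lam * (d * e * d + d) = e * d * d := by linear_combination d * hle
    have : lam * (e * d + 1) = e * d := by linarith
    linear_combination (d * m + 1) * e * h - (d * m + 1) * m * hle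
  · positivity
  · have : 0 < (e * m + 1) / (m ^ 2 + 1) := by positivity
    linarith
  · have hsq : 1 - 4 * (1 - lam) * ((d * m + 1) / (m ^ 2 + 1)) * (1 - (d * m + 1) / (m ^ 2 + 1))
        = ((m ^ 2 - 1) / (m ^ 2 + 1)) ^ 2 := by
      have : 1 + e * d ≠ 0 := by positivity
      rw [hrho, hl2]
      field_simp
      linear_combination -4 * hk
    rw [hsq, Real.sqrt_sq (div_nonneg (by nlinarith) (by positivity)), hrho, hl2]
    congr 1
    have : 1 + e * d ≠ 0 := by positivity
    have : e * m + 1 ≠ 0 := by positivity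
    have h3 : (1 - (m ^ 2 - 1) / (m ^ 2 + 1)) / (2 * (1 / (1 + e * d)) * ((e * m + 1) / (m ^ 2 + 1)))
        = (1 + e * d) / (e * m + 1) := by
      field_simp; ring
    rw [h3]
    field_simp
    linear_combination -e * h
end
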